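/- arXiv:1606.03499 — 3 statements merged into one kernel-verified Lean document; each statement's English description precedes it below -/
import Mathlib

section
/- Let (X,d,μ) be a compact metric measure space with 0 < μ(X) < ∞ which is Ahlfors n-regular at small scales: there exist c₁, c₂, R₁ > 0 with c₁ rⁿ ≤ μ(B_r(x)) ≤ c₂ rⁿ for all x ∈ X and r ∈ (0, R₁). Let (g_j)_{j∈ℕ} be a sequence of nonnegative integrable functions on X such that for some R₀ > 0, for every r ∈ (0, R₀) and every x ∈ X, ∫_{B_r(x)} g_j dμ → μ(B_r(x))/μ(X) as j → ∞. Then there exist K₁, K₂ > 0 and r₀ > 0, with K₁, K₂ independent of r, j and x, such that for each r ∈ (0, r₀) there exists J_r ∈ ℕ with: for all j ≥ J_r and all x ∈ X, K₁ rⁿ ≤ ∫_{B_r(x)} g_j dμ ≤ K₂ rⁿ. -/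
open MeasureTheory Metric Filter Real

noncomputable section

/-- `ψ : ℝⁿ → ℝ` is `ℤⁿ`-periodic: `ψ (x + v) = ψ x` for every integer vector `v`. -/
def ZnPeriodic (n : ℕ) (ψ : EuclideanSpace ℝ (Fin n) → ℝ) : Prop :=
  ∀ (x : EuclideanSpace ℝ (Fin n)) (v : Fin n → ℤ),
    ψ (show EuclideanSpace ℝ (Fin n) from WithLp.toLp 2 (fun i => x i + (v i : ℝ))) = ψ x

/-- The Euclidean Laplacian `Δψ = ∑ᵢ ∂²ψ/∂xᵢ²`. -/
def lap (n : ℕ) (ψ : EuclideanSpace ℝ (Fin n) → ℝ) (x : EuclideanSpace ℝ (Fin n)) : ℝ :=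
  ∑ i : Fin n,
    fderiv ℝ (fun y => fderiv ℝ ψ y (EuclideanSpace.single i (1:ℝ))) x
      (EuclideanSpace.single i (1:ℝ))

/-- `Ω` is a nodal domain of `ψ`: a connected component of `{ψ ≠ 0}`. -/
def IsNodalDomain {n : ℕ} (ψ : EuclideanSpace ℝ (Fin n) → ℝ)
    (Ω : Set (EuclideanSpace ℝ (Fin n))) : Prop :=
  ∃ x, ψ x ≠ 0 ∧ Ω = connectedComponentIn {y | ψ y ≠ 0} x

/-- The inner radius of a set: the supremum of radii of open balls contained in it. -/
def innerRadius {n : ℕ} (Ω : Set (EuclideanSpace ℝ (Fin n))) : ℝ :=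
  sSup {ρ : ℝ | 0 < ρ ∧ ∃ c, Metric.ball c ρ ⊆ Ω}

/-- The fundamental domain `[0,1)ⁿ` of the torus `ℝⁿ/ℤⁿ`. -/
def fundDom (n : ℕ) : Set (EuclideanSpace ℝ (Fin n)) :=
  {x | ∀ i, x i ∈ Set.Ico (0:ℝ) 1}

/-- `S ⊆ ℕ` has full density: `#(S ∩ [1,N]) / N → 1`. -/
def FullDensity (S : Set ℕ) : Prop :=
  Filter.Tendsto (fun N => (Nat.card ↥(S ∩ Set.Icc 1 N) : ℝ) / N) Filter.atTop (nhds 1)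

/-!
For a fixed radius `r`, equidistribution holds eventually, and simultaneously, at the finitely many
points `p` of an `r / 2`-net. A ball `B_r(x)` contains `B_{r/2}(p)` and lies in `B_{2r}(p)` for one
of them, so its mass is squeezed between two masses which are within a factor `2` of their limits.
By Ahlfors regularity these limits are comparable to `r ^ n`, uniformly in `r`.
-/

lemma monotone_setIntegral {X E : Type*} [MeasurableSpace X] [NormedAddCommGroup E]
    [NormedSpace ℝ E] [PartialOrder E] [IsOrderedAddMonoid E] [IsOrderedModule ℝ E]
    [OrderClosedTopology E] {μ : Measure X} {g : X → E} (hg0 : 0 ≤ᵐ[μ] g) (hg : Integrable g μ) :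
    Monotone fun A ↦ ∫ y in A, g y ∂μ :=
  fun _ _ hAB ↦ setIntegral_mono_set hg.integrableOn (ae_restrict_of_ae hg0) hAB.eventuallyLE

section UniformOnTotallyBounded

variable {X ι α : Type*} [PseudoMetricSpace X] [Preorder α] {S : Set X} {l : Filter ι}
  {m : ι → Set X → α} {ρ r : ℝ}

lemma eventually_forall_mem_of_totallyBounded {ε : ℝ} {p q : ι → X → Prop} (hS : TotallyBounded S)
    (hε : 0 < ε) (hp : ∀ y ∈ S, ∀ᶠ i in l, p i y)
    (hpq : ∀ i, ∀ y ∈ S, ∀ x ∈ S, dist x y < ε → p i y → q i x) :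
    ∀ᶠ i in l, ∀ x ∈ S, q i x := by
  obtain ⟨t, htS, ht, hcover⟩ := finite_approx_of_totallyBounded hS ε hε
  filter_upwards [(eventually_all_finite ht).2 fun y hy ↦ hp y (htS hy)] with i hi x hx
  obtain ⟨y, hyt, hxy⟩ := Set.mem_iUnion₂.1 (hcover hx)
  exact hpq i y (htS hyt) x hx hxy (hi y hyt)

lemma eventually_forall_mem_le_ball (hS : TotallyBounded S) (hm : ∀ i, Monotone (m i)) (hρ : ρ < r)
    {L : α} (hL : ∀ y ∈ S, ∀ᶠ i in l, L ≤ m i (ball y ρ)) :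
    ∀ᶠ i in l, ∀ x ∈ S, L ≤ m i (ball x r) := by
  refine eventually_forall_mem_of_totallyBounded hS (sub_pos.2 hρ) hL fun i y _ x _ hxy hy ↦ ?_
  exact hy.trans (hm i (ball_subset_ball' (by rw [dist_comm]; linarith)))

lemma eventually_forall_mem_ball_le (hS : TotallyBounded S) (hm : ∀ i, Monotone (m i)) (hρ : r < ρ)
    {U : α} (hU : ∀ y ∈ S, ∀ᶠ i in l, m i (ball y ρ) ≤ U) :
    ∀ᶠ i in l, ∀ x ∈ S, m i (ball x r) ≤ U := by
  refine eventually_forall_mem_of_totallyBounded hS (sub_pos.2 hρ) hU fun i y _ x _ hxy hy ↦ ?_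
  exact (hm i (ball_subset_ball' (by linarith))).trans hy

end UniformOnTotallyBounded

section AhlforsRegular

variable {X : Type*} [PseudoMetricSpace X] [MeasurableSpace X]

/-- Ahlfors `s`-regularity of `μ` at scales below `R`, with constants `c₁` and `c₂`, for balls
centred in `S`; the exponent `s` may be any real number. A ball of infinite measure has
`μ.real (ball x r) = 0`, so that `lower` rules it out. -/
structure AhlforsRegularOn (μ : Measure X) (S : Set X) (s c₁ c₂ R : ℝ) : Prop where
  lower_pos : 0 < c₁
  upper_pos : 0 < c₂
  scale_pos : 0 < R
  lower : ∀ x ∈ S, ∀ r, 0 < r → r < R → c₁ * r ^ s ≤ μ.real (ball x r)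
  upper : ∀ x ∈ S, ∀ r, 0 < r → r < R → μ.real (ball x r) ≤ c₂ * r ^ s

namespace AhlforsRegularOn

variable {μ : Measure X} {S : Set X} {s c₁ c₂ R a r : ℝ} {x : X}

lemma lt_mul_measureReal_ball_half (hμ : AhlforsRegularOn μ S s c₁ c₂ R) (ha : 0 < a) (hx : x ∈ S)
    (hr : 0 < r) (hrR : r / 2 < R) :
    a * c₁ / 2 ^ s / 2 * r ^ s < a * μ.real (ball x (r / 2)) := by
  have hc₁ := hμ.lower_pos
  calc a * c₁ / 2 ^ s / 2 * r ^ s = a * (c₁ * (r / 2) ^ s) / 2 := by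
        rw [div_rpow hr.le zero_le_two]; ring
    _ < a * (c₁ * (r / 2) ^ s) := half_lt_self (by positivity)
    _ ≤ a * μ.real (ball x (r / 2)) := by
        gcongr; exact hμ.lower x hx _ (half_pos hr) hrR

lemma mul_measureReal_ball_two_mul_lt (hμ : AhlforsRegularOn μ S s c₁ c₂ R) (ha : 0 < a)
    (hx : x ∈ S) (hr : 0 < r) (hrR : 2 * r < R) :
    a * μ.real (ball x (2 * r)) < 2 * (a * c₂ * 2 ^ s) * r ^ s := by
  have hc₂ := hμ.upper_pos
  calc a * μ.real (ball x (2 * r)) ≤ a * (c₂ * (2 * r) ^ s) := by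
        gcongr; exact hμ.upper x hx _ (by positivity) hrR
    _ < 2 * (a * (c₂ * (2 * r) ^ s)) := lt_two_mul_self (by positivity)
    _ = 2 * (a * c₂ * 2 ^ s) * r ^ s := by
        rw [mul_rpow zero_le_two hr.le]; ring

end AhlforsRegularOn

/-- `m i A` stands for the mass `∫ y in A, g i y ∂μ`, and `a` for `1 / μ X`. -/
theorem equidistribution_gives_uniform_mass_bounds_metric_measure_general {ι : Type*}
    {l : Filter ι} {μ : Measure X} {S : Set X} {s c₁ c₂ R₁ : ℝ} (hS : TotallyBounded S)
    (hμ : AhlforsRegularOn μ S s c₁ c₂ R₁) {m : ι → Set X → ℝ} (hm : ∀ i, Monotone (m i))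
    {a R₀ : ℝ} (ha : 0 < a) (hR₀ : 0 < R₀)
    (hequi : ∀ r, 0 < r → r < R₀ → ∀ x ∈ S,
      Tendsto (fun i ↦ m i (ball x r)) l (nhds (a * μ.real (ball x r)))) :
    ∃ K₁ K₂ r₀ : ℝ, 0 < K₁ ∧ 0 < K₂ ∧ 0 < r₀ ∧ ∀ r, 0 < r → r < r₀ →
      ∀ᶠ i in l, ∀ x ∈ S, K₁ * r ^ s ≤ m i (ball x r) ∧ m i (ball x r) ≤ K₂ * r ^ s := by
  have hc₁ := hμ.lower_pos
  have hc₂ := hμ.upper_pos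
  have hR₁ := hμ.scale_pos
  refine ⟨a * c₁ / 2 ^ s / 2, 2 * (a * c₂ * 2 ^ s), min R₀ R₁ / 2, by positivity, by positivity,
    by positivity, fun r hr hr₀ ↦ ?_⟩
  obtain ⟨hrR₀, hrR₁⟩ : 2 * r < R₀ ∧ 2 * r < R₁ := lt_min_iff.1 (by linarith)
  have hlower := eventually_forall_mem_le_ball hS hm (half_lt_self hr) fun y hy ↦
    (hequi (r / 2) (half_pos hr) (by linarith) y hy).eventually_const_le
      (hμ.lt_mul_measureReal_ball_half ha hy hr (by linarith))
  have hupper := eventually_forall_mem_ball_le hS hm (lt_two_mul_self hr) fun y hy ↦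
    (hequi (2 * r) (by positivity) hrR₀ y hy).eventually_le_const
      (hμ.mul_measureReal_ball_two_mul_lt ha hy hr hrR₁)
  filter_upwards [hlower, hupper] with i hl hu x hx using ⟨hl x hx, hu x hx⟩

end AhlforsRegular

theorem equidistribution_gives_uniform_mass_bounds_metric_measure
    (n : ℕ) (X : Type*) [MetricSpace X] [CompactSpace X]
    [MeasurableSpace X] [BorelSpace X] (μ : Measure X)
    (hμpos : 0 < μ Set.univ) (hμfin : μ Set.univ < ⊤)
    (c₁ c₂ R₁ : ℝ) (hc₁ : 0 < c₁) (hc₂ : 0 < c₂) (hR₁ : 0 < R₁)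
    (hAhlfors : ∀ (x : X) (r : ℝ), 0 < r → r < R₁ →
      c₁ * r ^ n ≤ (μ (Metric.ball x r)).toReal ∧
      (μ (Metric.ball x r)).toReal ≤ c₂ * r ^ n)
    (g : ℕ → X → ℝ) (hg0 : ∀ j x, 0 ≤ g j x) (hgint : ∀ j, Integrable (g j) μ)
    (R₀ : ℝ) (hR₀ : 0 < R₀)
    (hequi : ∀ r : ℝ, 0 < r → r < R₀ → ∀ x : X,
      Tendsto (fun j => ∫ y in Metric.ball x r, g j y ∂μ) atTop
        (nhds ((μ (Metric.ball x r)).toReal / (μ Set.univ).toReal))) :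
    ∃ K₁ K₂ r₀ : ℝ, 0 < K₁ ∧ 0 < K₂ ∧ 0 < r₀ ∧
      ∀ r : ℝ, 0 < r → r < r₀ → ∃ J : ℕ, ∀ j, J ≤ j → ∀ x : X,
        K₁ * r ^ n ≤ (∫ y in Metric.ball x r, g j y ∂μ) ∧
        (∫ y in Metric.ball x r, g j y ∂μ) ≤ K₂ * r ^ n := by
  have hμ : AhlforsRegularOn μ Set.univ n c₁ c₂ R₁ :=
    ⟨hc₁, hc₂, hR₁,
      fun x _ r hr hrR ↦ by
        simpa only [rpow_natCast, measureReal_def] using (hAhlfors x r hr hrR).1,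
      fun x _ r hr hrR ↦ by
        simpa only [rpow_natCast, measureReal_def] using (hAhlfors x r hr hrR).2⟩
  have hmass : 0 < (μ Set.univ).toReal⁻¹ := inv_pos.2 (ENNReal.toReal_pos hμpos.ne' hμfin.ne)
  obtain ⟨K₁, K₂, r₀, hK₁, hK₂, hr₀, hbounds⟩ :=
    equidistribution_gives_uniform_mass_bounds_metric_measure_general isCompact_univ.totallyBounded
      hμ (fun j ↦ monotone_setIntegral (.of_forall (hg0 j)) (hgint j)) hmass hR₀
      fun r hr hrR x _ ↦ by simpa only [measureReal_def, div_eq_inv_mul] using hequi r hr hrR x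
  simp only [rpow_natCast, Set.mem_univ, forall_const] at hbounds
  exact ⟨K₁, K₂, r₀, hK₁, hK₂, hr₀, fun r hr hrr₀ ↦ eventually_atTop.1 (hbounds r hr hrr₀)⟩
end
end

section
/- Let n ≥ 1. There exist constants c > 0 and s₀ > 0 depending only on n such that for every smooth ℤⁿ-periodic real-valued eigenfunction ψ : ℝⁿ → ℝ of the Euclidean Laplacian with eigenvalue λ ≥ 1, ψ not identically zero, every x ∈ ℝⁿ and every 0 < s < s₀, one has log( sup_{B_{2s}(x)} ψ² / sup_{B_s(x)} ψ² ) ≤ c √λ. -/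
open MeasureTheory Metric Filter Real

noncomputable section

/-!
For `f = ψ ^ 2` let `F τ` be the average of `f` against the Gaussian of variance `τ` centred at `x`.
Since `ψ` is a trigonometric sum `∑ aₖ exp (i ⟪vₖ, z⟫)` with all frequencies on the sphere
`‖vₖ‖ ^ 2 = lam`, the function `exp (lam * τ) * F τ` equals `∑ₖₗ Re (conj bₖ * bₗ) exp (τ ⟪vₖ, vₗ⟫)`
with `bₖ = aₖ exp (i ⟪vₖ, x⟫)`. Entrywise products of Gram matrices are positive semidefinite, so
this is a power series in `τ` with nonnegative coefficients and constant term `f x`.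

For such a series `g` the ratio `g (2 * τ) / g τ` increases with `τ`. At the large scale
`τ ≈ 1 / √lam` periodicity makes `F` comparable to the global supremum of `f`, up to a factor
`exp (C * √lam)`; hence `F (2 * τ) ≤ exp (C * √lam) * F τ` at all smaller scales. At the scale
`τ ≈ s ^ 2 / √lam` the part of the Gaussian outside the ball of radius `s` is so small that this
doubling inequality bounds `F τ` by twice the supremum of `f` over the ball, whereas monotonicity of
`g` at the points of the doubled ball bounds `f` there by `exp (C * √lam) * F τ`.
-/

open scoped ComplexConjugate RealInnerProductSpace

/-! ### Power series with nonnegative coefficients -/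

/-- `f` is the sum of an everywhere convergent power series with nonnegative coefficients. -/
def HasNonnegPowerSeries (f : ℝ → ℝ) : Prop :=
  ∃ c : ℕ → ℝ, (∀ m, 0 ≤ c m) ∧ ∀ t, HasSum (fun m ↦ c m * t ^ m) (f t)

lemma HasNonnegPowerSeries.monotoneOn {f : ℝ → ℝ} (hf : HasNonnegPowerSeries f) :
    MonotoneOn f (Set.Ici 0) := by
  obtain ⟨c, hc, hsum⟩ := hf
  intro s hs t _ hst
  exact hasSum_le (fun m ↦ mul_le_mul_of_nonneg_left (pow_le_pow_left₀ hs hst m) (hc m))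
    (hsum s) (hsum t)

lemma mul_pow_mul_pow_add_le {q t T : ℝ} (hq : 1 ≤ q) (ht : 0 ≤ t) (htT : t ≤ T) (i j : ℕ) :
    (q * t) ^ i * T ^ j + (q * t) ^ j * T ^ i ≤ (q * T) ^ i * t ^ j + (q * T) ^ j * t ^ i := by
  wlog hij : i ≤ j generalizing i j
  · linarith [this j i (le_of_not_ge hij)]
  have hcross : t ^ j * T ^ i ≤ T ^ j * t ^ i := by
    obtain ⟨d, rfl⟩ := Nat.exists_eq_add_of_le hij
    calc t ^ (i + d) * T ^ i = t ^ i * T ^ i * t ^ d := by ring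
      _ ≤ t ^ i * T ^ i * T ^ d := by gcongr; have := ht.trans htT; positivity
      _ = T ^ (i + d) * t ^ i := by ring
  have hpos := mul_nonneg (sub_nonneg.2 (pow_le_pow_right₀ hq hij)) (sub_nonneg.2 hcross)
  simp only [mul_pow]
  linarith

lemma sum_mul_pow_mul_sum_le (s : Finset ℕ) {c : ℕ → ℝ} (hc : ∀ m, 0 ≤ c m) {q t T : ℝ}
    (hq : 1 ≤ q) (ht : 0 ≤ t) (htT : t ≤ T) :
    (∑ i ∈ s, c i * (q * t) ^ i) * ∑ j ∈ s, c j * T ^ j ≤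
      (∑ i ∈ s, c i * (q * T) ^ i) * ∑ j ∈ s, c j * t ^ j := by
  have symmetrize (y z : ℝ) : 2 * ((∑ i ∈ s, c i * y ^ i) * ∑ j ∈ s, c j * z ^ j) =
      ∑ i ∈ s, ∑ j ∈ s, c i * c j * (y ^ i * z ^ j + y ^ j * z ^ i) := by
    rw [two_mul, Finset.sum_mul_sum]
    nth_rewrite 2 [Finset.sum_comm]
    simp only [← Finset.sum_add_distrib]
    refine Finset.sum_congr rfl fun i _ ↦ Finset.sum_congr rfl fun j _ ↦ ?_
    ring
  have hterms : ∑ i ∈ s, ∑ j ∈ s, c i * c j * ((q * t) ^ i * T ^ j + (q * t) ^ j * T ^ i) ≤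
      ∑ i ∈ s, ∑ j ∈ s, c i * c j * ((q * T) ^ i * t ^ j + (q * T) ^ j * t ^ i) :=
    Finset.sum_le_sum fun i _ ↦ Finset.sum_le_sum fun j _ ↦
      mul_le_mul_of_nonneg_left (mul_pow_mul_pow_add_le hq ht htT i j) (mul_nonneg (hc i) (hc j))
  rw [← symmetrize, ← symmetrize] at hterms
  linarith

-- For `f t > 0` and `f T > 0` this says that `t ↦ f (q * t) / f t` is monotone.
lemma HasNonnegPowerSeries.apply_mul_mul_apply_le {f : ℝ → ℝ} (hf : HasNonnegPowerSeries f)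
    {q t T : ℝ} (hq : 1 ≤ q) (ht : 0 ≤ t) (htT : t ≤ T) :
    f (q * t) * f T ≤ f (q * T) * f t := by
  obtain ⟨c, hc, hsum⟩ := hf
  have hlim (t : ℝ) := (hsum t).tendsto_sum_nat
  exact le_of_tendsto_of_tendsto' ((hlim _).mul (hlim _)) ((hlim _).mul (hlim _))
    fun N ↦ sum_mul_pow_mul_sum_le (Finset.range N) hc hq ht htT

section PosSemidef

variable {ι : Type*} [Fintype ι] {C A : Matrix ι ι ℝ}

lemma sum_mul_pow_nonneg (hC : C.PosSemidef) (hA : A.PosSemidef) (m : ℕ) :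
    0 ≤ ∑ k, ∑ l, C k l * A k l ^ m := by
  induction m generalizing C with
  | zero => simpa [dotProduct, Matrix.mulVec] using hC.dotProduct_mulVec_nonneg 1
  | succ m ih =>
    simpa only [Matrix.hadamard_apply, pow_succ', mul_assoc] using ih (hC.hadamard hA)

lemma hasNonnegPowerSeries_sum_mul_exp (hC : C.PosSemidef) (hA : A.PosSemidef) :
    HasNonnegPowerSeries fun t ↦ ∑ k, ∑ l, C k l * rexp (t * A k l) := by
  refine ⟨fun m ↦ (∑ k, ∑ l, C k l * A k l ^ m) / m.factorial,
    fun m ↦ div_nonneg (sum_mul_pow_nonneg hC hA m) (by positivity), fun t ↦ ?_⟩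
  have hexp (y : ℝ) : HasSum (fun m : ℕ ↦ y ^ m / m.factorial) (rexp y) := by
    rw [Real.exp_eq_exp_ℝ]
    exact NormedSpace.expSeries_div_hasSum_exp y
  have hsum := hasSum_sum fun k (_ : k ∈ Finset.univ) ↦ hasSum_sum fun l (_ : l ∈ Finset.univ) ↦
    (hexp (t * A k l)).mul_left (C k l)
  refine hsum.congr_fun fun m ↦ ?_
  simp only [Finset.sum_div, Finset.sum_mul, mul_pow]
  refine Finset.sum_congr rfl fun k _ ↦ Finset.sum_congr rfl fun l _ ↦ ?_
  ring

end PosSemidef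

/-! ### Gaussian averages -/

section Gaussian

variable {E : Type*} [NormedAddCommGroup E] [InnerProductSpace ℝ E]

local notation "d" => Module.finrank ℝ E

/-- The density at `z` of the centred Gaussian law on `E` with variance `τ` in each direction,
that is, the heat kernel of `E` at time `τ / 2`. -/
def gaussianKernel (τ : ℝ) (z : E) : ℝ :=
  ((2 * π * τ) ^ ((d : ℝ) / 2))⁻¹ * rexp (-‖z‖ ^ 2 / (2 * τ))

lemma gaussianKernel_nonneg {τ : ℝ} (hτ : 0 ≤ τ) (z : E) : 0 ≤ gaussianKernel τ z := by
  unfold gaussianKernel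
  positivity

@[fun_prop]
lemma continuous_gaussianKernel (τ : ℝ) : Continuous (gaussianKernel τ : E → ℝ) := by
  unfold gaussianKernel
  fun_prop

lemma gaussianKernel_le_of_exponent_le {τ r : ℝ} (hτ : 0 < τ) {z w : E}
    (h : r + ‖w‖ ^ 2 / (4 * τ) ≤ ‖z‖ ^ 2 / (2 * τ)) :
    gaussianKernel τ z ≤ 2 ^ ((d : ℝ) / 2) * rexp (-r) * gaussianKernel (2 * τ) w := by
  have hnorm : (2 * π * (2 * τ)) ^ ((d : ℝ) / 2) =
      2 ^ ((d : ℝ) / 2) * (2 * π * τ) ^ ((d : ℝ) / 2) := by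
    rw [← Real.mul_rpow zero_le_two (by positivity)]
    ring_nf
  have hexp : rexp (-‖z‖ ^ 2 / (2 * τ)) ≤ rexp (-r) * rexp (-‖w‖ ^ 2 / (2 * (2 * τ))) := by
    rw [← Real.exp_add, Real.exp_le_exp, neg_div, neg_div]
    ring_nf at h ⊢
    linarith
  calc gaussianKernel τ z
      ≤ ((2 * π * τ) ^ ((d : ℝ) / 2))⁻¹ * (rexp (-r) * rexp (-‖w‖ ^ 2 / (2 * (2 * τ)))) := by
        unfold gaussianKernel
        gcongr
    _ = 2 ^ ((d : ℝ) / 2) * rexp (-r) * gaussianKernel (2 * τ) w := by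
        rw [gaussianKernel, hnorm]
        field_simp

lemma gaussianKernel_le_gaussianKernel_add {τ : ℝ} (hτ : 0 < τ) (z u : E) :
    gaussianKernel τ z ≤
      2 ^ ((d : ℝ) / 2) * rexp (‖u‖ ^ 2 / (2 * τ)) * gaussianKernel (2 * τ) (z + u) := by
  have hparallelogram : ‖z + u‖ ^ 2 ≤ 2 * ‖z‖ ^ 2 + 2 * ‖u‖ ^ 2 := by
    nlinarith [norm_add_le z u, norm_nonneg (z + u), sq_nonneg (‖z‖ - ‖u‖)]
  have h := gaussianKernel_le_of_exponent_le (r := -(‖u‖ ^ 2 / (2 * τ))) hτ (z := z) (w := z + u)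
    (by field_simp; linarith)
  rwa [neg_neg] at h

lemma gaussianKernel_le_of_le_norm {τ s : ℝ} (hτ : 0 < τ) (hs : 0 ≤ s) {z : E} (hz : s ≤ ‖z‖) :
    gaussianKernel τ z ≤
      2 ^ ((d : ℝ) / 2) * rexp (-(s ^ 2 / (4 * τ))) * gaussianKernel (2 * τ) z := by
  have hsq : s ^ 2 ≤ ‖z‖ ^ 2 := pow_le_pow_left₀ hs hz 2
  exact gaussianKernel_le_of_exponent_le hτ (by field_simp; linarith)

variable [FiniteDimensional ℝ E] [MeasurableSpace E] [BorelSpace E]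

lemma integral_gaussianKernel {τ : ℝ} (hτ : 0 < τ) : ∫ z : E, gaussianKernel τ z = 1 := by
  have h := GaussianFourier.integral_rexp_neg_mul_sq_norm (V := E) (b := 1 / (2 * τ))
    (by positivity)
  have hbase : π / (1 / (2 * τ)) = 2 * π * τ := by field_simp
  have hexp (z : E) : rexp (-‖z‖ ^ 2 / (2 * τ)) = rexp (-(1 / (2 * τ)) * ‖z‖ ^ 2) := by
    ring_nf
  simp only [gaussianKernel, hexp, integral_const_mul, h, hbase]
  exact inv_mul_cancel₀ (by positivity)

lemma integrable_gaussianKernel {τ : ℝ} (hτ : 0 < τ) :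
    Integrable (gaussianKernel τ : E → ℝ) :=
  Integrable.of_integral_ne_zero (by simp [integral_gaussianKernel hτ])

lemma integral_gaussianKernel_mul_cexp {τ : ℝ} (hτ : 0 < τ) (u : E) :
    ∫ z : E, (gaussianKernel τ z : ℂ) * Complex.exp (Complex.I * ⟪u, z⟫) =
      (rexp (-τ * ‖u‖ ^ 2 / 2) : ℝ) := by
  have h := GaussianFourier.integral_cexp_neg_mul_sq_norm_add (V := E) (b := ((2 * τ)⁻¹ : ℝ))
    (by rw [Complex.ofReal_re]; positivity) Complex.I u
  have hτ' : (τ : ℂ) ≠ 0 := by exact_mod_cast hτ.ne'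
  have hbase : (π / ((2 * τ)⁻¹ : ℝ) : ℂ) = ((2 * π * τ : ℝ) : ℂ) := by
    push_cast
    field_simp
  have hvalue : Complex.exp (Complex.I ^ 2 * ‖u‖ ^ 2 / (4 * ((2 * τ)⁻¹ : ℝ))) =
      (rexp (-τ * ‖u‖ ^ 2 / 2) : ℝ) := by
    push_cast [Complex.I_sq]
    congr 1
    field_simp
    ring
  have hintegrand (z : E) : (gaussianKernel τ z : ℂ) * Complex.exp (Complex.I * ⟪u, z⟫) =
      (((2 * π * τ) ^ ((d : ℝ) / 2) : ℝ) : ℂ)⁻¹ *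
        Complex.exp (-((2 * τ)⁻¹ : ℝ) * ‖z‖ ^ 2 + Complex.I * ⟪u, z⟫) := by
    rw [gaussianKernel, Complex.exp_add]
    push_cast
    rw [mul_assoc]
    congr 3
    ring
  have hpow : (((2 * π * τ) ^ ((d : ℝ) / 2) : ℝ) : ℂ) = ((2 * π * τ : ℝ) : ℂ) ^ ((d : ℂ) / 2) := by
    rw [Complex.ofReal_cpow (by positivity)]
    simp
  have hne : (((2 * π * τ) ^ ((d : ℝ) / 2) : ℝ) : ℂ) ≠ 0 :=
    Complex.ofReal_ne_zero.2 (by positivity)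
  simp only [hintegrand, integral_const_mul]
  rw [h, hbase, hvalue, ← hpow, inv_mul_cancel_left₀ hne]

/-- The average of `f` against the Gaussian law on `E` centred at `x` with variance `τ` in each
direction. -/
def gaussianAverage (f : E → ℝ) (x : E) (τ : ℝ) : ℝ := ∫ w, f w * gaussianKernel τ (w - x)

lemma gaussianAverage_eq_gaussianAverage_zero (f : E → ℝ) (x : E) (τ : ℝ) :
    gaussianAverage f x τ = gaussianAverage (fun z ↦ f (x + z)) 0 τ := by
  rw [gaussianAverage, gaussianAverage, ← integral_add_left_eq_self _ x]
  simp only [add_sub_cancel_left, sub_zero]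

lemma gaussianAverage_nonneg {f : E → ℝ} (hf : ∀ w, 0 ≤ f w) (x : E) {τ : ℝ} (hτ : 0 ≤ τ) :
    0 ≤ gaussianAverage f x τ :=
  integral_nonneg fun w ↦ mul_nonneg (hf w) (gaussianKernel_nonneg hτ _)

section Bounded

variable {f : E → ℝ} {B τ : ℝ} (hf : ∀ w, 0 ≤ f w) (hcont : Continuous f) (hB : ∀ w, f w ≤ B)

include hf hcont hB

lemma integrable_mul_gaussianKernel (x : E) (hτ : 0 < τ) :
    Integrable fun w ↦ f w * gaussianKernel τ (w - x) :=
  ((integrable_gaussianKernel hτ).comp_sub_right x).bdd_mul hcont.aestronglyMeasurable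
    (.of_forall fun w ↦ (Real.norm_of_nonneg (hf w)).trans_le (hB w))

lemma gaussianAverage_le_add_mul {M C σ : ℝ} {x y : E} (hτ : 0 < τ) (hσ : 0 < σ)
    (h : ∀ w, f w * gaussianKernel τ (w - x) ≤
      M * gaussianKernel τ (w - x) + C * (f w * gaussianKernel σ (w - y))) :
    gaussianAverage f x τ ≤ M + C * gaussianAverage f y σ := by
  have hmass : ∫ w, gaussianKernel τ (w - x) = 1 :=
    (integral_sub_right_eq_self (gaussianKernel τ) x).trans (integral_gaussianKernel hτ)
  have hconst := ((integrable_gaussianKernel hτ).comp_sub_right x).const_mul M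
  have hmul := (integrable_mul_gaussianKernel hf hcont hB y hσ).const_mul C
  calc gaussianAverage f x τ
      ≤ ∫ w, (M * gaussianKernel τ (w - x) + C * (f w * gaussianKernel σ (w - y))) :=
        integral_mono (integrable_mul_gaussianKernel hf hcont hB x hτ) (hconst.add hmul) h
    _ = M + C * gaussianAverage f y σ := by
        rw [integral_add hconst hmul, integral_const_mul, integral_const_mul, hmass, mul_one]
        rfl

lemma gaussianAverage_le (x : E) (hτ : 0 < τ) : gaussianAverage f x τ ≤ B := by
  simpa using gaussianAverage_le_add_mul (C := 0) (y := x) hf hcont hB hτ hτ fun w ↦ by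
    simpa using mul_le_mul_of_nonneg_right (hB w) (gaussianKernel_nonneg hτ.le _)

lemma gaussianAverage_le_gaussianAverage_two_mul (x y : E) (hτ : 0 < τ) :
    gaussianAverage f y τ ≤
      2 ^ ((d : ℝ) / 2) * rexp (‖y - x‖ ^ 2 / (2 * τ)) * gaussianAverage f x (2 * τ) := by
  simpa using gaussianAverage_le_add_mul (M := 0) hf hcont hB hτ (mul_pos two_pos hτ) fun w ↦ by
    have h := mul_le_mul_of_nonneg_left (gaussianKernel_le_gaussianKernel_add hτ (w - y) (y - x))
      (hf w)
    rw [sub_add_sub_cancel] at h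
    linarith

lemma gaussianAverage_le_of_le_on_ball {x : E} {s M : ℝ} (hτ : 0 < τ) (hs : 0 < s)
    (hM : ∀ w ∈ ball x s, f w ≤ M) :
    gaussianAverage f x τ ≤
      M + 2 ^ ((d : ℝ) / 2) * rexp (-(s ^ 2 / (4 * τ))) * gaussianAverage f x (2 * τ) := by
  refine gaussianAverage_le_add_mul hf hcont hB hτ (mul_pos two_pos hτ) fun w ↦ ?_
  have hker (σ : ℝ) (hσ : 0 < σ) : 0 ≤ gaussianKernel σ (w - x) := gaussianKernel_nonneg hσ.le _
  have hτker := hker τ hτ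
  have h2τker := hker (2 * τ) (by positivity)
  have hM0 : 0 ≤ M := (hf x).trans (hM x (mem_ball_self hs))
  have hfw := hf w
  by_cases hw : w ∈ ball x s
  · have := mul_le_mul_of_nonneg_right (hM w hw) hτker
    have : 0 ≤ 2 ^ ((d : ℝ) / 2) * rexp (-(s ^ 2 / (4 * τ))) *
        (f w * gaussianKernel (2 * τ) (w - x)) := by positivity
    linarith
  · rw [mem_ball, dist_eq_norm, not_lt] at hw
    have := mul_le_mul_of_nonneg_left (gaussianKernel_le_of_le_norm hτ hs.le hw) hfw
    have := mul_nonneg hM0 hτker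
    linarith

end Bounded

end Gaussian

/-! ### Doubling from absolutely monotone Gaussian averages -/

section Doubling

variable {E : Type*} [NormedAddCommGroup E] [InnerProductSpace ℝ E] [FiniteDimensional ℝ E]
  [MeasurableSpace E] [BorelSpace E]

local notation "d" => Module.finrank ℝ E

/-- A bounded continuous function `f ≥ 0` whose Gaussian averages, multiplied by `exp (lam * τ)`,
are for each centre `x` an everywhere convergent power series in `τ` with nonnegative coefficients
and constant term `f x`. The square of an eigenfunction with eigenvalue `lam` has this property. -/
structure HasAbsolutelyMonotoneAverages (f : E → ℝ) (lam : ℝ) : Prop where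
  nonneg : ∀ x, 0 ≤ f x
  continuous : Continuous f
  bddAbove : BddAbove (Set.range f)
  exists_powerSeries : ∀ x, ∃ g : ℝ → ℝ, HasNonnegPowerSeries g ∧ g 0 = f x ∧
    ∀ τ, 0 < τ → g τ = rexp (lam * τ) * gaussianAverage f x τ

namespace HasAbsolutelyMonotoneAverages

variable {f : E → ℝ} {lam : ℝ} (hf : HasAbsolutelyMonotoneAverages f lam)

include hf

lemma exists_bound : ∃ B, ∀ w, f w ≤ B :=
  hf.bddAbove.imp fun _ hB w ↦ hB ⟨w, rfl⟩

lemma apply_le_exp_mul_gaussianAverage (x : E) {τ : ℝ} (hτ : 0 < τ) :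
    f x ≤ rexp (lam * τ) * gaussianAverage f x τ := by
  obtain ⟨g, hg, hg0, hgτ⟩ := hf.exists_powerSeries x
  rw [← hg0, ← hgτ τ hτ]
  exact hg.monotoneOn Set.self_mem_Ici hτ.le hτ.le

lemma apply_le_mul_gaussianAverage_two_mul (x y : E) {τ : ℝ} (hτ : 0 < τ) :
    f y ≤ rexp (lam * τ) * (2 ^ ((d : ℝ) / 2) * rexp (‖y - x‖ ^ 2 / (2 * τ)) *
      gaussianAverage f x (2 * τ)) := by
  obtain ⟨B, hB⟩ := hf.exists_bound
  refine (hf.apply_le_exp_mul_gaussianAverage y hτ).trans ?_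
  gcongr
  exact gaussianAverage_le_gaussianAverage_two_mul hf.nonneg hf.continuous hB x y hτ

lemma gaussianAverage_two_mul_mul_le (hlam : 0 ≤ lam) (x : E) {τ σ : ℝ} (hτ : 0 < τ)
    (hτσ : τ ≤ σ) :
    gaussianAverage f x (2 * τ) * gaussianAverage f x σ ≤
      rexp (lam * σ) * gaussianAverage f x (2 * σ) * gaussianAverage f x τ := by
  have hσ := hτ.trans_le hτσ
  obtain ⟨g, hg, -, hgavg⟩ := hf.exists_powerSeries x
  have hratio := hg.apply_mul_mul_apply_le one_le_two hτ.le hτσ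
  rw [hgavg _ hτ, hgavg _ hσ, hgavg _ (mul_pos two_pos hτ), hgavg _ (mul_pos two_pos hσ)] at hratio
  have hsplit (t : ℝ) : rexp (lam * (2 * t)) = rexp (lam * t) * rexp (lam * t) := by
    rw [← Real.exp_add]
    ring_nf
  have hexp : 1 ≤ rexp (lam * τ) := Real.one_le_exp (by positivity)
  have havg (t : ℝ) (ht : 0 < t) : 0 ≤ gaussianAverage f x t :=
    gaussianAverage_nonneg hf.nonneg x ht.le
  have h2τ := havg (2 * τ) (by positivity)
  have hσavg := havg σ hσ
  refine le_of_mul_le_mul_left ?_ (by positivity : 0 < rexp (lam * τ) * rexp (lam * σ))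
  calc rexp (lam * τ) * rexp (lam * σ) * (gaussianAverage f x (2 * τ) * gaussianAverage f x σ)
      ≤ rexp (lam * τ) * (rexp (lam * τ) * rexp (lam * σ) *
          (gaussianAverage f x (2 * τ) * gaussianAverage f x σ)) :=
        le_mul_of_one_le_left (by positivity) hexp
    _ = rexp (lam * (2 * τ)) * gaussianAverage f x (2 * τ) *
          (rexp (lam * σ) * gaussianAverage f x σ) := by rw [hsplit]; ring
    _ ≤ rexp (lam * (2 * σ)) * gaussianAverage f x (2 * σ) *
          (rexp (lam * τ) * gaussianAverage f x τ) := hratio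
    _ = rexp (lam * τ) * rexp (lam * σ) *
          (rexp (lam * σ) * gaussianAverage f x (2 * σ) * gaussianAverage f x τ) := by
        rw [hsplit]; ring

end HasAbsolutelyMonotoneAverages

lemma two_rpow_div_two_le_exp {a r : ℝ} (ha : 0 ≤ a) (hr : 1 ≤ r) : 2 ^ (a / 2) ≤ rexp (a * r) :=
  calc (2 : ℝ) ^ (a / 2) ≤ rexp 1 ^ (a / 2) := by
        gcongr
        linarith [Real.add_one_le_exp (1 : ℝ)]
    _ = rexp (a / 2) := by rw [← Real.exp_mul, one_mul]
    _ ≤ rexp (a * r) := by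
        gcongr
        nlinarith

namespace HasAbsolutelyMonotoneAverages

variable {f : E → ℝ} {r R : ℝ} (hf : HasAbsolutelyMonotoneAverages f (r ^ 2)) (hr : 1 ≤ r)
  (hR : 0 < R) {x : E} (hrep : ∀ z, ∃ y, ‖y - x‖ ≤ R ∧ f y = f z)

include hf hr hR hrep

lemma apply_le_exp_mul_gaussianAverage_largeScale (z : E) :
    f z ≤ rexp ((d + R ^ 2 + 1) * r) * gaussianAverage f x (2 * (R ^ 2 / r)) := by
  obtain ⟨y, hyx, hyz⟩ := hrep z
  have hgrowth : r ^ 2 * (R ^ 2 / r) = R ^ 2 * r := by field_simp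
  have hshift : ‖y - x‖ ^ 2 / (2 * (R ^ 2 / r)) ≤ r := by
    have hsq : ‖y - x‖ ^ 2 ≤ R ^ 2 := pow_le_pow_left₀ (norm_nonneg _) hyx 2
    rw [div_le_iff₀ (by positivity)]
    field_simp
    nlinarith
  have hdim : (2 : ℝ) ^ ((d : ℝ) / 2) ≤ rexp (d * r) :=
    two_rpow_div_two_le_exp (Nat.cast_nonneg _) hr
  have havg : 0 ≤ gaussianAverage f x (2 * (R ^ 2 / r)) :=
    gaussianAverage_nonneg hf.nonneg x (by positivity)
  calc f z ≤ rexp (R ^ 2 * r) * (2 ^ ((d : ℝ) / 2) *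
          rexp (‖y - x‖ ^ 2 / (2 * (R ^ 2 / r))) * gaussianAverage f x (2 * (R ^ 2 / r))) := by
        rw [← hyz, ← hgrowth]
        exact hf.apply_le_mul_gaussianAverage_two_mul x y (by positivity)
    _ ≤ rexp (R ^ 2 * r) * (rexp (d * r) * rexp r * gaussianAverage f x (2 * (R ^ 2 / r))) := by
        gcongr
    _ = rexp ((d + R ^ 2 + 1) * r) * gaussianAverage f x (2 * (R ^ 2 / r)) := by
        rw [← mul_assoc, ← Real.exp_add, ← Real.exp_add]
        ring_nf

lemma gaussianAverage_two_mul_le {τ : ℝ} (hτ : 0 < τ) (hτR : τ ≤ 2 * (R ^ 2 / r)) :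
    gaussianAverage f x (2 * τ) ≤ rexp ((d + 3 * R ^ 2 + 1) * r) * gaussianAverage f x τ := by
  have hsup := hf.apply_le_exp_mul_gaussianAverage_largeScale hr hR hrep
  set σ := 2 * (R ^ 2 / r) with hσ_def
  have hσ : 0 < σ := by positivity
  have havg : 0 ≤ gaussianAverage f x τ := gaussianAverage_nonneg hf.nonneg x hτ.le
  rcases (gaussianAverage_nonneg hf.nonneg x hσ.le).eq_or_lt with hzero | hpos
  · refine (gaussianAverage_le hf.nonneg hf.continuous (fun w ↦ ?_) x (by positivity)).trans
      (mul_nonneg (exp_nonneg _) havg)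
    simpa [← hzero] using hsup w
  have hlarge : gaussianAverage f x (2 * σ) ≤
      rexp ((d + R ^ 2 + 1) * r) * gaussianAverage f x σ :=
    gaussianAverage_le hf.nonneg hf.continuous hsup x (by positivity)
  have hgrowth : r ^ 2 * σ = 2 * R ^ 2 * r := by
    rw [hσ_def]
    field_simp
  refine le_of_mul_le_mul_right ?_ hpos
  calc gaussianAverage f x (2 * τ) * gaussianAverage f x σ
      ≤ rexp (2 * R ^ 2 * r) * gaussianAverage f x (2 * σ) * gaussianAverage f x τ := by
        rw [← hgrowth]
        exact hf.gaussianAverage_two_mul_mul_le (sq_nonneg r) x hτ hτR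
    _ ≤ rexp (2 * R ^ 2 * r) * (rexp ((d + R ^ 2 + 1) * r) * gaussianAverage f x σ) *
          gaussianAverage f x τ := by gcongr
    _ = rexp ((d + 3 * R ^ 2 + 1) * r) * gaussianAverage f x τ * gaussianAverage f x σ := by
        rw [← mul_assoc, ← Real.exp_add]
        ring_nf

/- Outside `ball x s` the kernel of variance `τ` is at most `C * exp (-s ^ 2 / (4 * τ))` times that
of variance `2 * τ`; for small `τ` this beats the loss in doubling the variance. -/
lemma gaussianAverage_le_two_mul {s M τ : ℝ} (hs : 0 < s) (hsR : s ≤ R) (hτ : 0 < τ)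
    (hτs : (2 * d + 3 * R ^ 2 + 2) * r ≤ s ^ 2 / (4 * τ)) (hM : ∀ w ∈ ball x s, f w ≤ M) :
    gaussianAverage f x τ ≤ 2 * M := by
  have hr0 : 0 < r := one_pos.trans_le hr
  obtain ⟨B, hB⟩ := hf.exists_bound
  have hτR : τ ≤ 2 * (R ^ 2 / r) := by
    have hfactor : 2 ≤ 2 * (d : ℝ) + 3 * R ^ 2 + 2 := by
      linarith [sq_nonneg R, Nat.cast_nonneg (α := ℝ) d]
    have hτr : 2 * r ≤ R ^ 2 / (4 * τ) :=
      calc 2 * r ≤ s ^ 2 / (4 * τ) := (mul_le_mul_of_nonneg_right hfactor hr0.le).trans hτs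
        _ ≤ R ^ 2 / (4 * τ) := by gcongr
    rw [le_div_iff₀ (by positivity)] at hτr
    rw [← mul_div_assoc, le_div_iff₀ hr0]
    nlinarith [mul_pos hτ hr0]
  have hdim : (2 : ℝ) ^ ((d : ℝ) / 2) ≤ rexp (d * r) :=
    two_rpow_div_two_le_exp (Nat.cast_nonneg _) hr
  have hhalf : rexp (-r) ≤ 1 / 2 := by
    rw [Real.exp_neg, ← one_div]
    exact one_div_le_one_div_of_le two_pos (by linarith [Real.add_one_le_exp r])
  have havg (t : ℝ) (ht : 0 < t) : 0 ≤ gaussianAverage f x t :=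
    gaussianAverage_nonneg hf.nonneg x ht.le
  have htail : 2 ^ ((d : ℝ) / 2) * rexp (-(s ^ 2 / (4 * τ))) * gaussianAverage f x (2 * τ) ≤
      1 / 2 * gaussianAverage f x τ :=
    calc 2 ^ ((d : ℝ) / 2) * rexp (-(s ^ 2 / (4 * τ))) * gaussianAverage f x (2 * τ)
        ≤ rexp (d * r) * rexp (-((2 * d + 3 * R ^ 2 + 2) * r)) *
            (rexp ((d + 3 * R ^ 2 + 1) * r) * gaussianAverage f x τ) := by
          gcongr
          · exact havg _ (by positivity)
          · exact hf.gaussianAverage_two_mul_le hr hR hrep hτ hτR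
      _ = rexp (-r) * gaussianAverage f x τ := by
          rw [← mul_assoc, ← Real.exp_add, ← Real.exp_add]
          ring_nf
      _ ≤ 1 / 2 * gaussianAverage f x τ := mul_le_mul_of_nonneg_right hhalf (havg τ hτ)
  linarith [gaussianAverage_le_of_le_on_ball hf.nonneg hf.continuous hB hτ hs hM]

lemma apply_le_of_le_on_ball_of_le {s M : ℝ} (hs : 0 < s) (hsR : s ≤ R)
    (hM : ∀ w ∈ ball x s, f w ≤ M) {y : E} (hy : y ∈ ball x (2 * s)) :
    f y ≤ rexp ((33 * d + 49 * R ^ 2 + 33) * r) * M := by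
  have hr0 : 0 < r := one_pos.trans_le hr
  set A := (2 * d + 3 * R ^ 2 + 2) * r with hA_def
  have hA : r ≤ A := le_mul_of_one_le_left hr0.le
    (by linarith [sq_nonneg R, Nat.cast_nonneg (α := ℝ) d])
  have hA0 : 0 < A := hr0.trans_le hA
  set τ := s ^ 2 / (4 * A) with hτ_def
  have hτ : 0 < τ := by positivity
  have hscale : s ^ 2 / (4 * τ) = A := by
    rw [hτ_def]
    field_simp
  have havg : gaussianAverage f x τ ≤ 2 * M :=
    hf.gaussianAverage_le_two_mul hr hR hrep hs hsR hτ hscale.ge hM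
  have hM0 : 0 ≤ M := (hf.nonneg x).trans (hM x (mem_ball_self hs))
  have hgrowth : r ^ 2 * (τ / 2) ≤ R ^ 2 * r :=
    calc r ^ 2 * (τ / 2) ≤ r ^ 2 * (R ^ 2 / (1 * r) / 1) := by
          rw [hτ_def]
          gcongr <;> norm_num
      _ = R ^ 2 * r := by field_simp
  have hshift : ‖y - x‖ ^ 2 / τ ≤ 16 * A := by
    rw [mem_ball, dist_eq_norm] at hy
    calc ‖y - x‖ ^ 2 / τ ≤ (2 * s) ^ 2 / τ := by gcongr
      _ = 16 * A := by rw [hτ_def]; field_simp; norm_num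
  have hdim : (2 : ℝ) ^ ((d : ℝ) / 2) ≤ rexp (d * r) :=
    two_rpow_div_two_le_exp (Nat.cast_nonneg _) hr
  have htwo : gaussianAverage f x τ ≤ rexp r * M :=
    havg.trans (mul_le_mul_of_nonneg_right (by linarith [Real.add_one_le_exp r]) hM0)
  have hpoint := hf.apply_le_mul_gaussianAverage_two_mul x y (half_pos hτ)
  rw [mul_div_cancel₀ τ two_ne_zero] at hpoint
  have havg0 : 0 ≤ gaussianAverage f x τ := gaussianAverage_nonneg hf.nonneg x hτ.le
  calc f y ≤ _ := hpoint
    _ ≤ rexp (R ^ 2 * r) * (rexp (d * r) * rexp (16 * A) * (rexp r * M)) := by gcongr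
    _ = rexp ((33 * d + 49 * R ^ 2 + 33) * r) * M := by
        rw [← mul_assoc _ _ M, ← mul_assoc _ _ M, ← Real.exp_add, ← Real.exp_add, ← Real.exp_add,
          hA_def]
        ring_nf

lemma apply_le_of_le_on_ball {s M : ℝ} (hs : 0 < s) (hM : ∀ w ∈ ball x s, f w ≤ M) {y : E}
    (hy : y ∈ ball x (2 * s)) : f y ≤ rexp ((33 * d + 49 * R ^ 2 + 33) * r) * M := by
  rcases le_or_gt s R with hsR | hRs
  · exact hf.apply_le_of_le_on_ball_of_le hr hR hrep hs hsR hM hy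
  obtain ⟨y', hy'x, hy'⟩ := hrep y
  have hM0 : 0 ≤ M := (hf.nonneg x).trans (hM x (mem_ball_self hs))
  calc f y = f y' := hy'.symm
    _ ≤ M := hM y' (mem_ball_iff_norm.2 (hy'x.trans_lt hRs))
    _ ≤ rexp ((33 * d + 49 * R ^ 2 + 33) * r) * M :=
        le_mul_of_one_le_left hM0 (Real.one_le_exp (by positivity))

end HasAbsolutelyMonotoneAverages

end Doubling

/-! ### Trigonometric sums with frequencies on a sphere -/

section TrigSum

variable {ι E : Type*} [Fintype ι] [NormedAddCommGroup E] [InnerProductSpace ℝ E]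

/-- The trigonometric sum `∑ k, a k * exp (i ⟪v k, z⟫)` with coefficients `a` and
frequencies `v`. -/
def trigSum (a : ι → ℂ) (v : ι → E) (z : E) : ℂ :=
  ∑ k, a k * Complex.exp (Complex.I * ⟪v k, z⟫)

@[fun_prop]
lemma continuous_trigSum (a : ι → ℂ) (v : ι → E) : Continuous (trigSum a v) := by
  unfold trigSum
  fun_prop

lemma norm_trigSum_le (a : ι → ℂ) (v : ι → E) (z : E) : ‖trigSum a v z‖ ≤ ∑ k, ‖a k‖ :=
  norm_sum_le_of_le _ fun k _ ↦ by rw [norm_mul, mul_comm Complex.I, Complex.norm_exp_ofReal_mul_I,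
    mul_one]

lemma trigSum_add (a : ι → ℂ) (v : ι → E) (x z : E) :
    trigSum a v (x + z) = trigSum (fun k ↦ a k * Complex.exp (Complex.I * ⟪v k, x⟫)) v z := by
  refine Finset.sum_congr rfl fun k _ ↦ ?_
  rw [inner_add_right, Complex.ofReal_add, mul_add, Complex.exp_add, mul_assoc]

lemma norm_trigSum_sq (a : ι → ℂ) (v : ι → E) (z : E) :
    ((‖trigSum a v z‖ ^ 2 : ℝ) : ℂ) =
      ∑ k, ∑ l, a l * conj (a k) * Complex.exp (Complex.I * ⟪v l - v k, z⟫) := by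
  rw [Complex.ofReal_pow, ← Complex.conj_mul', trigSum, map_sum, Finset.sum_mul_sum]
  refine Finset.sum_congr rfl fun k _ ↦ Finset.sum_congr rfl fun l _ ↦ ?_
  rw [map_mul, ← Complex.exp_conj, map_mul, Complex.conj_I, Complex.conj_ofReal, mul_mul_mul_comm,
    mul_comm (conj (a k)), ← Complex.exp_add, inner_sub_left, Complex.ofReal_sub]
  ring_nf

variable [FiniteDimensional ℝ E] [MeasurableSpace E] [BorelSpace E]

lemma gaussianAverage_norm_trigSum_sq_zero (a : ι → ℂ) (v : ι → E) {τ : ℝ} (hτ : 0 < τ) :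
    gaussianAverage (fun w ↦ ‖trigSum a v w‖ ^ 2) 0 τ =
      ∑ k, ∑ l, ⟪a k, a l⟫ * rexp (-τ * ‖v l - v k‖ ^ 2 / 2) := by
  have hint (u : E) :
      Integrable fun w ↦ (gaussianKernel τ w : ℂ) * Complex.exp (Complex.I * ⟪u, w⟫) :=
    (integrable_gaussianKernel hτ).ofReal.mul_bdd (c := 1) (by fun_prop) (.of_forall fun w ↦ by
      rw [mul_comm Complex.I, Complex.norm_exp_ofReal_mul_I])
  have hcomplex : ((gaussianAverage (fun w ↦ ‖trigSum a v w‖ ^ 2) 0 τ : ℝ) : ℂ) =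
      ∑ k, ∑ l, a l * conj (a k) * (rexp (-τ * ‖v l - v k‖ ^ 2 / 2) : ℝ) :=
    calc ((gaussianAverage (fun w ↦ ‖trigSum a v w‖ ^ 2) 0 τ : ℝ) : ℂ)
        = ∫ w, ∑ k, ∑ l, a l * conj (a k) *
            ((gaussianKernel τ w : ℂ) * Complex.exp (Complex.I * ⟪v l - v k, w⟫)) := by
          rw [gaussianAverage, ← integral_complex_ofReal]
          congr with w
          rw [sub_zero, Complex.ofReal_mul, norm_trigSum_sq]
          simp only [Finset.sum_mul, mul_assoc, mul_comm (gaussianKernel τ w : ℂ)]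
      _ = _ := by
          rw [integral_finsetSum _ fun k _ ↦ integrable_finsetSum _ fun l _ ↦
            (hint _).const_mul _]
          refine Finset.sum_congr rfl fun k _ ↦ ?_
          rw [integral_finsetSum _ fun l _ ↦ (hint _).const_mul _]
          simp only [integral_const_mul, integral_gaussianKernel_mul_cexp hτ]
  have hre := congrArg Complex.re hcomplex
  simpa only [Complex.ofReal_re, Complex.re_sum, Complex.re_mul_ofReal, Complex.inner] using hre

lemma hasAbsolutelyMonotoneAverages_norm_trigSum_sq (a : ι → ℂ) {v : ι → E} {lam : ℝ}
    (hv : ∀ k, ‖v k‖ ^ 2 = lam) :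
    HasAbsolutelyMonotoneAverages (fun z ↦ ‖trigSum a v z‖ ^ 2) lam where
  nonneg z := sq_nonneg _
  continuous := by fun_prop
  bddAbove := by
    refine ⟨(∑ k, ‖a k‖) ^ 2, ?_⟩
    rintro _ ⟨z, rfl⟩
    exact pow_le_pow_left₀ (norm_nonneg _) (norm_trigSum_le a v z) 2
  exists_powerSeries x := by
    set b : ι → ℂ := fun k ↦ a k * Complex.exp (Complex.I * ⟪v k, x⟫)
    refine ⟨_, hasNonnegPowerSeries_sum_mul_exp (Matrix.posSemidef_gram ℝ b)
      (Matrix.posSemidef_gram ℝ v), ?_, fun τ hτ ↦ ?_⟩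
    · have hx : trigSum a v x = trigSum b v 0 := by rw [← trigSum_add, add_zero]
      have hre := congrArg Complex.re (norm_trigSum_sq b v 0)
      rw [Complex.ofReal_re] at hre
      simp [hx, hre, Complex.inner, Matrix.gram_apply, mul_comm]
    · have htranslate : gaussianAverage (fun z ↦ ‖trigSum a v z‖ ^ 2) x τ =
          gaussianAverage (fun z ↦ ‖trigSum b v z‖ ^ 2) 0 τ := by
        rw [gaussianAverage_eq_gaussianAverage_zero]
        simp only [trigSum_add, b]
      rw [htranslate, gaussianAverage_norm_trigSum_sq_zero b v hτ]
      simp only [Finset.mul_sum]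
      refine Finset.sum_congr rfl fun k _ ↦ Finset.sum_congr rfl fun l _ ↦ ?_
      rw [mul_left_comm, ← Real.exp_add, norm_sub_sq_real, hv, hv, Matrix.gram_apply,
        Matrix.gram_apply, real_inner_comm (v k)]
      ring_nf

end TrigSum

/-! ### Periodic functions as functions on the torus -/

section Torus

open UnitAddTorus

-- Mathlib keeps the instances behind `UnitAddTorus.mFourierCoeff` local to its own file.
local instance : MeasureSpace UnitAddCircle := ⟨AddCircle.haarAddCircle⟩

local instance : Measure.IsAddHaarMeasure (volume : Measure UnitAddCircle) :=
  inferInstanceAs (Measure.IsAddHaarMeasure AddCircle.haarAddCircle)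

local instance : IsProbabilityMeasure (volume : Measure UnitAddCircle) :=
  inferInstanceAs (IsProbabilityMeasure AddCircle.haarAddCircle)

variable {n : ℕ}

/-- The projection of `ℝⁿ` onto the torus `ℝⁿ/ℤⁿ`. -/
def toUnitAddTorus (n : ℕ) : EuclideanSpace ℝ (Fin n) →+ UnitAddTorus (Fin n) where
  toFun x i := (x i : UnitAddCircle)
  map_zero' := by ext i; simp
  map_add' x y := by ext i; simp

lemma isQuotientMap_toUnitAddTorus : Topology.IsQuotientMap (toUnitAddTorus n) :=
  (IsOpenQuotientMap.piMap fun _ ↦ QuotientAddGroup.isOpenQuotientMap_mk).isQuotientMap.comp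
    (PiLp.homeomorph 2 fun _ : Fin n ↦ ℝ).isQuotientMap

@[fun_prop]
lemma continuous_toUnitAddTorus : Continuous (toUnitAddTorus n) :=
  isQuotientMap_toUnitAddTorus.continuous

lemma ZnPeriodic.factorsThrough_toUnitAddTorus {ψ : EuclideanSpace ℝ (Fin n) → ℝ}
    (hψ : ZnPeriodic n ψ) : Function.FactorsThrough ψ (toUnitAddTorus n) := by
  intro x y h
  have hint (i : Fin n) : ∃ m : ℤ, x i + m = y i := by
    obtain ⟨m, hm⟩ := AddSubgroup.mem_zmultiples_iff.1 (QuotientAddGroup.eq.1 (congrFun h i))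
    refine ⟨m, ?_⟩
    rw [zsmul_one] at hm
    rw [hm, add_neg_cancel_left]
  choose m hm using hint
  rw [← hψ x m]
  congr 1
  ext i
  exact hm i

/-- The function on the torus induced by a continuous periodic function. -/
def ZnPeriodic.torusLift {ψ : EuclideanSpace ℝ (Fin n) → ℝ} (hψ : ZnPeriodic n ψ)
    (hcont : Continuous ψ) : C(UnitAddTorus (Fin n), ℂ) :=
  Topology.IsQuotientMap.lift (f := ⟨toUnitAddTorus n, continuous_toUnitAddTorus⟩)
    isQuotientMap_toUnitAddTorus ⟨fun x ↦ (ψ x : ℂ), by fun_prop⟩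
    (hψ.factorsThrough_toUnitAddTorus.comp_left Complex.ofReal)

lemma ZnPeriodic.torusLift_toUnitAddTorus {ψ : EuclideanSpace ℝ (Fin n) → ℝ}
    (hψ : ZnPeriodic n ψ) (hcont : Continuous ψ) (x : EuclideanSpace ℝ (Fin n)) :
    hψ.torusLift hcont (toUnitAddTorus n x) = ψ x :=
  DFunLike.congr_fun
    (Topology.IsQuotientMap.lift_comp (f := ⟨toUnitAddTorus n, continuous_toUnitAddTorus⟩)
      isQuotientMap_toUnitAddTorus ⟨fun x ↦ (ψ x : ℂ), by fun_prop⟩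
      (hψ.factorsThrough_toUnitAddTorus.comp_left Complex.ofReal)) x

lemma ZnPeriodic.fderiv_apply {ψ : EuclideanSpace ℝ (Fin n) → ℝ} (hψ : ZnPeriodic n ψ)
    (u : EuclideanSpace ℝ (Fin n)) : ZnPeriodic n fun y ↦ fderiv ℝ ψ y u := by
  intro x v
  set w : EuclideanSpace ℝ (Fin n) := WithLp.toLp 2 fun i ↦ (v i : ℝ)
  have htranslate : (fun y ↦ ψ (y + w)) = ψ := funext fun y ↦ hψ y v
  change fderiv ℝ ψ (x + w) u = fderiv ℝ ψ x u
  rw [← fderiv_comp_add_right, htranslate]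

lemma ZnPeriodic.exists_norm_sub_le {ψ : EuclideanSpace ℝ (Fin n) → ℝ} (hψ : ZnPeriodic n ψ)
    (x z : EuclideanSpace ℝ (Fin n)) : ∃ y, ‖y - x‖ ≤ √n ∧ ψ y = ψ z := by
  set y : EuclideanSpace ℝ (Fin n) := WithLp.toLp 2 fun i ↦ z i + ((-⌊z i - x i⌋ : ℤ) : ℝ)
  refine ⟨y, Real.le_sqrt_of_sq_le ?_, hψ z _⟩
  have hfract (i : Fin n) : (y - x) i = Int.fract (z i - x i) := by
    simp only [y, PiLp.sub_apply, Int.cast_neg, Int.fract]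
    ring
  calc ‖y - x‖ ^ 2 = ∑ i, Int.fract (z i - x i) ^ 2 := by
        simp only [EuclideanSpace.norm_sq_eq, hfract, Real.norm_eq_abs, sq_abs]
    _ ≤ ∑ _ : Fin n, 1 := Finset.sum_le_sum fun i _ ↦
        pow_le_one₀ (Int.fract_nonneg _) (Int.fract_lt_one _).le
    _ = n := by simp

/-! ### Fourier coefficients of periodic eigenfunctions -/

/-- The frequency `2πk` of the character `UnitAddTorus.mFourier k`. -/
def torusFrequency (k : Fin n → ℤ) : EuclideanSpace ℝ (Fin n) :=
  WithLp.toLp 2 fun i ↦ 2 * π * k i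

lemma finite_setOf_norm_torusFrequency_sq_eq (lam : ℝ) :
    {k : Fin n → ℤ | ‖torusFrequency k‖ ^ 2 = lam}.Finite := by
  have hbound (k : Fin n → ℤ) : ‖k‖ ≤ ‖torusFrequency k‖ := by
    refine (pi_norm_le_iff_of_nonneg (norm_nonneg _)).2 fun i ↦ ?_
    calc ‖k i‖ ≤ 2 * π * |(k i : ℝ)| := by
          rw [Int.norm_eq_abs]
          exact le_mul_of_one_le_left (abs_nonneg _) (by linarith [Real.pi_gt_three])
      _ = ‖torusFrequency k i‖ := by
          rw [torusFrequency, Real.norm_eq_abs, abs_mul, abs_of_pos Real.two_pi_pos]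
      _ ≤ ‖torusFrequency k‖ := PiLp.norm_apply_le _ i
  refine (isCompact_closedBall (0 : Fin n → ℤ) (√lam)).finite_of_discrete.subset fun k hk ↦ ?_
  rw [mem_closedBall_zero_iff]
  exact (hbound k).trans (Real.le_sqrt_of_sq_le hk.le)

lemma mFourier_toUnitAddTorus (k : Fin n → ℤ) (x : EuclideanSpace ℝ (Fin n)) :
    mFourier k (toUnitAddTorus n x) = Complex.exp (Complex.I * ⟪torusFrequency k, x⟫) := by
  simp only [mFourier, ContinuousMap.coe_mk, toUnitAddTorus, AddMonoidHom.coe_mk, ZeroHom.coe_mk,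
    fourier_coe_apply, torusFrequency, PiLp.inner_apply]
  rw [← Complex.exp_sum, Complex.ofReal_sum, Finset.mul_sum]
  congr 1
  refine Finset.sum_congr rfl fun i _ ↦ ?_
  simp
  ring

lemma mFourier_apply_add {ι : Type*} [Fintype ι] (k : ι → ℤ) (s t : UnitAddTorus ι) :
    mFourier k (s + t) = mFourier k s * mFourier k t := by
  simp only [mFourier, ContinuousMap.coe_mk, Pi.add_apply, fourier_apply, smul_add,
    AddCircle.toCircle_add, Circle.coe_mul, Finset.prod_mul_distrib]

lemma mFourier_neg_apply_neg {ι : Type*} [Fintype ι] (k : ι → ℤ) (t : UnitAddTorus ι) :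
    mFourier (-k) (-t) = mFourier k t := by
  simp only [mFourier, ContinuousMap.coe_mk, Pi.neg_apply, fourier_apply, neg_smul_neg]

lemma mFourierCoeff_comp_add_right {ι : Type*} [Fintype ι] (f : UnitAddTorus ι → ℂ) (k : ι → ℤ)
    (s : UnitAddTorus ι) :
    mFourierCoeff (fun t ↦ f (t + s)) k = mFourier k s * mFourierCoeff f k := by
  have htranslate (t : UnitAddTorus ι) :
      mFourier (-k) (t - s) = mFourier k s * mFourier (-k) t := by
    rw [sub_eq_neg_add, mFourier_apply_add, mFourier_neg_apply_neg]
  rw [mFourierCoeff, ← integral_sub_right_eq_self _ s, mFourierCoeff, ← integral_const_mul]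
  simp only [htranslate, sub_add_cancel, smul_eq_mul, mul_assoc]

lemma hasDerivAt_mFourierCoeff_comp_add {f f' : C(UnitAddTorus (Fin n), ℂ)}
    {u : EuclideanSpace ℝ (Fin n)}
    (hderiv : ∀ t (ε : ℝ), HasDerivAt (fun ε : ℝ ↦ f (t + toUnitAddTorus n (ε • u)))
      (f' (t + toUnitAddTorus n (ε • u))) ε) (k : Fin n → ℤ) :
    HasDerivAt (fun ε : ℝ ↦ mFourierCoeff (fun t ↦ f (t + toUnitAddTorus n (ε • u))) k)
      (mFourierCoeff f' k) 0 := by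
  have hint (g : C(UnitAddTorus (Fin n), ℂ)) : Integrable g :=
    g.continuous.integrable_of_hasCompactSupport (.of_compactSpace _)
  have hsmul (g : C(UnitAddTorus (Fin n), ℂ)) (ε : ℝ) :
      Integrable fun t ↦ mFourier (-k) t • g (t + toUnitAddTorus n (ε • u)) :=
    hint ⟨fun t ↦ mFourier (-k) t • g (t + toUnitAddTorus n (ε • u)), by fun_prop⟩
  have hbound (t : UnitAddTorus (Fin n)) (ε : ℝ) :
      ‖mFourier (-k) t • f' (t + toUnitAddTorus n (ε • u))‖ ≤ ‖f'‖ := by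
    have hchar := (mFourier (-k)).norm_coe_le_norm t
    rw [mFourier_norm] at hchar
    rw [norm_smul]
    exact (mul_le_of_le_one_left (norm_nonneg _) hchar).trans (f'.norm_coe_le_norm _)
  have h := (hasDerivAt_integral_of_dominated_loc_of_deriv_le (x₀ := (0 : ℝ)) univ_mem
    (.of_forall fun ε ↦ (hsmul f ε).aestronglyMeasurable) (hsmul f 0)
    (hsmul f' 0).aestronglyMeasurable (.of_forall fun t ε _ ↦ hbound t ε) (integrable_const _)
    (.of_forall fun t ε _ ↦ (hderiv t ε).fun_const_smul _)).2
  simpa only [mFourierCoeff, zero_smul, map_zero, add_zero] using h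

lemma mFourierCoeff_of_hasDerivAt {f f' : C(UnitAddTorus (Fin n), ℂ)}
    {u : EuclideanSpace ℝ (Fin n)}
    (hderiv : ∀ t (ε : ℝ), HasDerivAt (fun ε : ℝ ↦ f (t + toUnitAddTorus n (ε • u)))
      (f' (t + toUnitAddTorus n (ε • u))) ε) (k : Fin n → ℤ) :
    mFourierCoeff f' k = Complex.I * ⟪torusFrequency k, u⟫ * mFourierCoeff f k := by
  have htranslate (ε : ℝ) : mFourierCoeff (fun t ↦ f (t + toUnitAddTorus n (ε • u))) k =
      Complex.exp (ε * (Complex.I * ⟪torusFrequency k, u⟫)) * mFourierCoeff f k := by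
    rw [mFourierCoeff_comp_add_right, mFourier_toUnitAddTorus, inner_smul_right,
      Complex.ofReal_mul, mul_left_comm]
  have hleft := hasDerivAt_mFourierCoeff_comp_add hderiv k
  simp only [htranslate] at hleft
  have hright := (((Complex.ofRealCLM.hasDerivAt (x := (0 : ℝ))).mul_const
    (Complex.I * (⟪torusFrequency k, u⟫ : ℂ))).cexp).mul_const (mFourierCoeff f k)
  simpa using hleft.unique hright

lemma ZnPeriodic.mFourierCoeff_torusLift_fderiv_apply {ψ : EuclideanSpace ℝ (Fin n) → ℝ}
    (hψ : ZnPeriodic n ψ) (hdiff : Differentiable ℝ ψ) (u : EuclideanSpace ℝ (Fin n))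
    (hcont : Continuous fun y ↦ fderiv ℝ ψ y u) (k : Fin n → ℤ) :
    mFourierCoeff ((hψ.fderiv_apply u).torusLift hcont) k =
      Complex.I * ⟪torusFrequency k, u⟫ * mFourierCoeff (hψ.torusLift hdiff.continuous) k := by
  refine mFourierCoeff_of_hasDerivAt (fun t ε ↦ ?_) k
  obtain ⟨x, rfl⟩ := isQuotientMap_toUnitAddTorus.surjective t
  simp only [← map_add, torusLift_toUnitAddTorus]
  have hline : HasDerivAt (fun ε : ℝ ↦ x + ε • u) u ε := by
    simpa using ((hasDerivAt_id ε).smul_const u).const_add x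
  exact ((hdiff _).hasFDerivAt.comp_hasDerivAt ε hline).ofReal_comp

lemma ZnPeriodic.mFourierCoeff_torusLift_fderiv_fderiv_apply {ψ : EuclideanSpace ℝ (Fin n) → ℝ}
    (hψ : ZnPeriodic n ψ) (hdiff : Differentiable ℝ ψ) (u : EuclideanSpace ℝ (Fin n))
    (hdiff₂ : Differentiable ℝ fun y ↦ fderiv ℝ ψ y u)
    (hcont : Continuous fun y ↦ fderiv ℝ (fun y ↦ fderiv ℝ ψ y u) y u) (k : Fin n → ℤ) :
    mFourierCoeff (((hψ.fderiv_apply u).fderiv_apply u).torusLift hcont) k =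
      -⟪torusFrequency k, u⟫ ^ 2 * mFourierCoeff (hψ.torusLift hdiff.continuous) k := by
  rw [(hψ.fderiv_apply u).mFourierCoeff_torusLift_fderiv_apply hdiff₂,
    hψ.mFourierCoeff_torusLift_fderiv_apply hdiff, ← mul_assoc, mul_mul_mul_comm,
    Complex.I_mul_I, neg_one_mul, ← sq]

lemma ZnPeriodic.norm_torusFrequency_sq_eq_of_mFourierCoeff_ne_zero
    {ψ : EuclideanSpace ℝ (Fin n) → ℝ} (hψ : ZnPeriodic n ψ) (hdiff : ContDiff ℝ 2 ψ)
    {lam : ℝ} (hlap : ∀ x, lap n ψ x = -lam * ψ x) {k : Fin n → ℤ}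
    (hk : mFourierCoeff (hψ.torusLift hdiff.continuous) k ≠ 0) :
    ‖torusFrequency k‖ ^ 2 = lam := by
  set f := hψ.torusLift hdiff.continuous
  let e (i : Fin n) : EuclideanSpace ℝ (Fin n) := EuclideanSpace.single i 1
  have hdiff₂ (i : Fin n) : ContDiff ℝ 1 fun y ↦ fderiv ℝ ψ y (e i) :=
    (hdiff.fderiv_right le_rfl).clm_apply contDiff_const
  have hcont (i : Fin n) : Continuous fun y ↦ fderiv ℝ (fun y ↦ fderiv ℝ ψ y (e i)) y (e i) :=
    ((hdiff₂ i).continuous_fderiv one_ne_zero).clm_apply continuous_const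
  let f₂ (i : Fin n) := ((hψ.fderiv_apply (e i)).fderiv_apply (e i)).torusLift (hcont i)
  have hlaplacian (t : UnitAddTorus (Fin n)) : ∑ i, f₂ i t = -lam * f t := by
    obtain ⟨x, rfl⟩ := isQuotientMap_toUnitAddTorus.surjective t
    simp only [f, f₂, torusLift_toUnitAddTorus]
    exact_mod_cast hlap x
  have hcoeff : ∑ i, mFourierCoeff (f₂ i) k = -lam * mFourierCoeff f k := by
    have hint (i : Fin n) : Integrable fun t ↦ mFourier (-k) t • f₂ i t :=
      (by fun_prop : Continuous fun t ↦ mFourier (-k) t • f₂ i t).integrable_of_hasCompactSupport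
        (.of_compactSpace _)
    simp only [mFourierCoeff]
    rw [← integral_finsetSum _ fun i _ ↦ hint i, ← integral_const_mul]
    simp only [smul_eq_mul, ← Finset.mul_sum, hlaplacian, mul_left_comm]
  have hcoeff₂ (i : Fin n) :
      mFourierCoeff (f₂ i) k = -⟪torusFrequency k, e i⟫ ^ 2 * mFourierCoeff f k :=
    hψ.mFourierCoeff_torusLift_fderiv_fderiv_apply (hdiff.differentiable two_ne_zero) (e i)
      ((hdiff₂ i).differentiable one_ne_zero) (hcont i) k
  have hnorm : ‖torusFrequency k‖ ^ 2 = ∑ i, ⟪torusFrequency k, e i⟫ ^ 2 := by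
    simp [e, EuclideanSpace.norm_sq_eq, EuclideanSpace.inner_single_right]
  simp only [hcoeff₂, ← Finset.sum_mul, Finset.sum_neg_distrib] at hcoeff
  rw [hnorm]
  exact_mod_cast neg_injective (mul_right_cancel₀ hk hcoeff)

lemma ZnPeriodic.exists_eq_trigSum {ψ : EuclideanSpace ℝ (Fin n) → ℝ} (hψ : ZnPeriodic n ψ)
    (hdiff : ContDiff ℝ 2 ψ) {lam : ℝ} (hlap : ∀ x, lap n ψ x = -lam * ψ x) :
    ∃ (K : Finset (Fin n → ℤ)) (a : K → ℂ), (∀ k ∈ K, ‖torusFrequency k‖ ^ 2 = lam) ∧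
      ∀ z, (ψ z : ℂ) = trigSum a (fun k ↦ torusFrequency k.1) z := by
  set f := hψ.torusLift hdiff.continuous
  set K := (finite_setOf_norm_torusFrequency_sq_eq (n := n) lam).toFinset with hK
  have hvanish (k : Fin n → ℤ) (hk : k ∉ K) : mFourierCoeff f k = 0 := by
    by_contra hne
    exact hk (by simpa [hK] using
      hψ.norm_torusFrequency_sq_eq_of_mFourierCoeff_ne_zero hdiff hlap hne)
  refine ⟨K, fun k ↦ mFourierCoeff f k, fun k hk ↦ by simpa [hK] using hk, fun z ↦ ?_⟩
  have hfourier := hasSum_mFourier_series_apply_of_summable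
    (summable_of_ne_finset_zero hvanish) (toUnitAddTorus n z)
  have hfinite := hasSum_sum_of_ne_finset_zero (L := .unconditional _)
    (f := fun k ↦ mFourierCoeff f k • mFourier k (toUnitAddTorus n z)) (s := K)
    fun k hk ↦ by rw [hvanish k hk, zero_smul]
  rw [← hψ.torusLift_toUnitAddTorus hdiff.continuous, hfourier.unique hfinite,
    ← Finset.sum_coe_sort]
  simp only [mFourier_toUnitAddTorus, smul_eq_mul, trigSum]

end Torus

lemma ZnPeriodic.hasAbsolutelyMonotoneAverages_sq {n : ℕ} {ψ : EuclideanSpace ℝ (Fin n) → ℝ}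
    (hψ : ZnPeriodic n ψ) (hdiff : ContDiff ℝ 2 ψ) {lam : ℝ}
    (hlap : ∀ x, lap n ψ x = -lam * ψ x) :
    HasAbsolutelyMonotoneAverages (fun z ↦ ψ z ^ 2) lam := by
  obtain ⟨K, a, hK, htrig⟩ := hψ.exists_eq_trigSum hdiff hlap
  have hsq (z : EuclideanSpace ℝ (Fin n)) :
      ψ z ^ 2 = ‖trigSum a (fun k : K ↦ torusFrequency k.1) z‖ ^ 2 := by
    rw [← htrig, Complex.norm_real, Real.norm_eq_abs, sq_abs]
  simp only [hsq]
  exact hasAbsolutelyMonotoneAverages_norm_trigSum_sq a fun k ↦ hK k k.2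

/-! ### The doubling inequality -/

lemma log_div_le_of_le_exp_mul {a b C : ℝ} (hC : 0 ≤ C) (ha : 0 ≤ a) (h : a ≤ rexp C * b) :
    Real.log (a / b) ≤ C := by
  rcases ha.eq_or_lt with rfl | ha
  · simpa using hC
  have hb : 0 < b := pos_of_mul_pos_right (ha.trans_le h) (exp_nonneg C)
  rw [Real.log_le_iff_le_exp (div_pos ha hb), div_le_iff₀ hb]
  exact h

theorem donnelly_fefferman_doubling_general (n : ℕ) :
    ∃ c : ℝ, 0 < c ∧
      ∀ (ψ : EuclideanSpace ℝ (Fin n) → ℝ) (lam : ℝ),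
        1 ≤ lam → ContDiff ℝ 2 ψ → ZnPeriodic n ψ →
        (∀ x, lap n ψ x = -lam * ψ x) → (∃ x, ψ x ≠ 0) →
        ∀ (x : EuclideanSpace ℝ (Fin n)) (s : ℝ), 0 < s →
          Real.log (sSup ((fun y => (ψ y)^2) '' Metric.ball x (2*s)) /
              sSup ((fun y => (ψ y)^2) '' Metric.ball x s)) ≤ c * Real.sqrt lam := by
  refine ⟨82 * (n + 1), by positivity, fun ψ lam hlam hdiff hψ hlap _ x s hs ↦ ?_⟩
  have hf : HasAbsolutelyMonotoneAverages (fun z ↦ ψ z ^ 2) (√lam ^ 2) := by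
    rw [Real.sq_sqrt (by positivity)]
    exact hψ.hasAbsolutelyMonotoneAverages_sq hdiff hlap
  have hrep (z : EuclideanSpace ℝ (Fin n)) : ∃ y, ‖y - x‖ ≤ √(n + 1) ∧ ψ y ^ 2 = ψ z ^ 2 := by
    obtain ⟨y, hyx, hyz⟩ := hψ.exists_norm_sub_le x z
    exact ⟨y, hyx.trans (Real.sqrt_le_sqrt (by simp)), by rw [hyz]⟩
  have hconst : 33 * (Module.finrank ℝ (EuclideanSpace ℝ (Fin n)) : ℝ) + 49 * √(n + 1) ^ 2 + 33 =
      82 * (n + 1) := by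
    rw [finrank_euclideanSpace_fin, Real.sq_sqrt (by positivity)]
    ring
  have hbdd := hf.bddAbove.mono (Set.image_subset_range _ (ball x s))
  refine log_div_le_of_le_exp_mul (by positivity)
    (Real.sSup_nonneg (Set.forall_mem_image.2 fun y _ ↦ sq_nonneg _)) ?_
  rw [← hconst]
  refine csSup_le ((nonempty_ball.2 (by positivity)).image _) (Set.forall_mem_image.2 fun y hy ↦ ?_)
  exact hf.apply_le_of_le_on_ball (Real.one_le_sqrt.2 hlam) (by positivity) hrep hs
    (fun w hw ↦ le_csSup hbdd (Set.mem_image_of_mem _ hw)) hy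

theorem donnelly_fefferman_doubling
    (n : ℕ) (hn : 1 ≤ n) :
    ∃ c s₀ : ℝ, 0 < c ∧ 0 < s₀ ∧
      ∀ (ψ : EuclideanSpace ℝ (Fin n) → ℝ) (lam : ℝ),
        1 ≤ lam → ContDiff ℝ (⊤ : ℕ∞) ψ → ZnPeriodic n ψ →
        (∀ x, lap n ψ x = -lam * ψ x) → (∃ x, ψ x ≠ 0) →
        ∀ (x : EuclideanSpace ℝ (Fin n)) (s : ℝ), 0 < s → s < s₀ →
          Real.log (sSup ((fun y => (ψ y)^2) '' Metric.ball x (2*s)) /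
              sSup ((fun y => (ψ y)^2) '' Metric.ball x s)) ≤ c * Real.sqrt lam := by
  obtain ⟨c, hc, h⟩ := donnelly_fefferman_doubling_general n
  exact ⟨c, 1, hc, one_pos, fun ψ lam hlam hdiff hψ hlap hne x s hs _ ↦
    h ψ lam hlam (contDiff_infty.1 hdiff 2) hψ hlap hne x s hs⟩
end
end

section
/- Let n ≥ 3. There exist constants ε₀ ∈ (0,1), R₀ > 0 and a₃ > 0, depending only on n, such that for every smooth ℤⁿ-periodic real-valued eigenfunction ψ : ℝⁿ → ℝ of the Euclidean Laplacian with eigenvalue λ ≥ 1, ψ not identically zero, and every ball B_R(p) with 0 < R < R₀ satisfying {ψ = 0} ∩ B_{R/2}(p) ≠ ∅, one has Vol({ψ ≥ 0} ∩ B_R(p)) / Vol(B_R(p)) ≥ a₃ / N(λ)^{n-1}, where N(λ) = sup{ log( sup_{B_{2s}(x)} ψ² / sup_{B_s(x)} ψ² ) : x ∈ ℝⁿ, 0 < s ≤ ε₀ λ^{-1/2} }. -/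
open MeasureTheory Metric Filter Real

noncomputable section

/-!
Let `ψ` vanish at `z`, let `r` be at most a small multiple of the wavelength `lam ^ (-1 / 2)`, and
let `N` bound the doubling index. Harnack's inequality for `max ψ - ψ`, which is positive at `z`,
bounds `|ψ|` near `z` by the maximum of `ψ` alone, so doubling of `sup ψ²` shows that the maximum
of `ψ` over the ball of radius `t` about `z` grows at most by a factor `e ^ O(N)` from `t = r` to
`t = 2 r`. Cut this range into `2 m` shells, `m ~ N`: on at least `m` of them the maximum at most
doubles. By the maximum principle the inner sphere of such a shell carries a point where `ψ` is
comparable to the maximum, and a radially weighted mean value inequality turns this into a fixed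
proportion of `{0 ≤ ψ}` in a ball of radius `~ r / N` about that point. These balls are disjoint,
and their total volume is `~ N (r / N) ^ n`, which gives the factor `N ^ (1 - n)`.

On larger balls there is no doubling information. However, a solution cannot keep its sign on a
ball of radius much larger than the wavelength, so every ball whose radius is a suitable fixed
multiple of the wavelength has a zero in its half ball, and averaging over the centres by Fubini
carries the density to all larger balls.
-/

section Bump

variable {E : Type*} [NormedAddCommGroup E]

/-- The radial profile `(1 - ‖x‖²)₊`. Its powers are the weights of the spherically symmetric
means below. -/
def bump (x : E) : ℝ := max 0 (1 - ‖x‖ ^ 2)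

lemma bump_nonneg (x : E) : 0 ≤ bump x := le_max_left _ _

lemma bump_le_one (x : E) : bump x ≤ 1 :=
  max_le zero_le_one (sub_le_self _ (sq_nonneg _))

lemma bump_pow_le_one (k : ℕ) (x : E) : bump x ^ k ≤ 1 :=
  pow_le_one₀ (bump_nonneg x) (bump_le_one x)

lemma bump_eq_zero {x : E} (hx : 1 ≤ ‖x‖) : bump x = 0 :=
  max_eq_left (sub_nonpos.2 (one_le_pow₀ hx))

lemma bump_pow_eq_zero {k : ℕ} (hk : k ≠ 0) {x : E} (hx : 1 ≤ ‖x‖) : bump x ^ k = 0 := by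
  rw [bump_eq_zero hx, zero_pow hk]

lemma three_quarters_le_bump {x : E} (hx : ‖x‖ ≤ 1 / 2) : 3 / 4 ≤ bump x :=
  le_max_of_le_right (by nlinarith [norm_nonneg x])

lemma continuous_bump : Continuous (bump : E → ℝ) := by
  unfold bump; fun_prop

lemma mul_bump_pow_le_mul_bump_pow {k : ℕ} (hk : k ≠ 0) {a b : ℝ} {x : E}
    (h : ‖x‖ < 1 → a ≤ b) : a * bump x ^ k ≤ b * bump x ^ k := by
  rcases lt_or_ge ‖x‖ 1 with hx | hx
  · exact mul_le_mul_of_nonneg_right (h hx) (pow_nonneg (bump_nonneg x) k)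
  · simp only [bump_pow_eq_zero hk hx, mul_zero, le_refl]

lemma hasDerivAt_posPart_pow {k : ℕ} (hk : k ≠ 0) (t : ℝ) :
    HasDerivAt (fun t : ℝ => max 0 t ^ (k + 1)) ((k + 1) * max 0 t ^ k) t := by
  rcases lt_trichotomy t 0 with ht | rfl | ht
  · have hzero : (fun t : ℝ => max 0 t ^ (k + 1)) =ᶠ[nhds t] fun _ => 0 := by
      filter_upwards [Iio_mem_nhds ht] with s hs
      rw [max_eq_left (le_of_lt hs), zero_pow k.succ_ne_zero]
    rw [max_eq_left ht.le, zero_pow hk, mul_zero]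
    exact (hasDerivAt_const t 0).congr_of_eventuallyEq hzero
  · have hquad : (fun t : ℝ => max 0 t ^ (k + 1)) =O[nhds 0] fun t : ℝ => ‖t - 0‖ ^ (k + 1) := by
      refine Asymptotics.IsBigO.of_norm_le fun s => ?_
      rw [norm_pow, sub_zero, Real.norm_eq_abs, Real.norm_eq_abs]
      exact pow_le_pow_left₀ (abs_nonneg _)
        ((abs_of_nonneg (le_max_left 0 s)).trans_le (max_le (abs_nonneg s) (le_abs_self s))) _
    have hderiv := (hquad.hasFDerivAt (𝕜 := ℝ) (by lia)).hasDerivAt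
    simpa [hk] using hderiv
  · have hpow : (fun t : ℝ => max 0 t ^ (k + 1)) =ᶠ[nhds t] fun s => s ^ (k + 1) := by
      filter_upwards [Ioi_mem_nhds ht] with s hs
      rw [max_eq_right (le_of_lt hs)]
    rw [max_eq_right ht.le]
    simpa using (hasDerivAt_pow (k + 1) t).congr_of_eventuallyEq hpow

lemma hasFDerivAt_bump_pow {E : Type*} [NormedAddCommGroup E] [InnerProductSpace ℝ E]
    {k : ℕ} (hk : k ≠ 0) (x : E) :
    HasFDerivAt (fun x : E => bump x ^ (k + 1))
      (-(2 * (k + 1) * bump x ^ k) • innerSL ℝ x) x := by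
  have hsq : HasFDerivAt (fun x : E => 1 - ‖x‖ ^ 2) (-(2 • innerSL ℝ x)) x :=
    (hasStrictFDerivAt_norm_sq x).hasFDerivAt.const_sub 1
  refine ((hasDerivAt_posPart_pow hk _).comp_hasFDerivAt x hsq).congr_fderiv ?_
  ext v
  simp only [bump, smul_neg, neg_apply, smul_apply, coe_innerSL_apply, nsmul_eq_mul,
    Nat.cast_ofNat, smul_eq_mul, neg_smul, neg_inj]
  ring

end Bump

lemma add_smul_mem_closedBall {E : Type*} [NormedAddCommGroup E] [NormedSpace ℝ E] {x y : E}
    {r : ℝ} (hr : 0 ≤ r) (hx : ‖x‖ ≤ 1) : y + r • x ∈ closedBall y r := by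
  rw [mem_closedBall, dist_eq_norm, add_sub_cancel_left, norm_smul, Real.norm_of_nonneg hr]
  exact mul_le_of_le_one_right hr hx

section BumpMean

variable {E : Type*} [NormedAddCommGroup E] [NormedSpace ℝ E] [MeasurableSpace E]

/-- The integral of `f (y + r x)` against the weight `bump x ^ k`: up to the constant
`bumpMass μ k`, a radially weighted mean of `f` over the ball of radius `r` about `y`. -/
def bumpMean (μ : Measure E) (k : ℕ) (f : E → ℝ) (y : E) (r : ℝ) : ℝ :=
  ∫ x, f (y + r • x) * bump x ^ k ∂μ

/-- The total mass of the weight `bump x ^ k`. -/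
def bumpMass (μ : Measure E) (k : ℕ) : ℝ := ∫ x, bump x ^ k ∂μ

variable {μ : Measure E} {k : ℕ} {f g : E → ℝ} {y : E} {r : ℝ}

lemma bumpMean_zero_radius : bumpMean μ k f y 0 = f y * bumpMass μ k := by
  simp only [bumpMean, bumpMass, zero_smul, add_zero, integral_const_mul]

lemma bumpMean_const (c : ℝ) : bumpMean μ k (fun _ => c) y r = c * bumpMass μ k :=
  integral_const_mul _ _

lemma bumpMean_const_mul (c : ℝ) :
    bumpMean μ k (fun x => c * f x) y r = c * bumpMean μ k f y r := by
  simp only [bumpMean, mul_assoc, integral_const_mul]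

lemma bumpMean_neg : bumpMean μ k (fun x => -f x) y r = -bumpMean μ k f y r := by
  simp only [bumpMean, neg_mul, integral_neg]

lemma bumpMean_nonneg (hr : 0 ≤ r) (hk : k ≠ 0) (hpos : ∀ x ∈ closedBall y r, 0 ≤ f x) :
    0 ≤ bumpMean μ k f y r := by
  refine integral_nonneg fun x => ?_
  have h := mul_bump_pow_le_mul_bump_pow hk (x := x) fun hx =>
      hpos _ (add_smul_mem_closedBall hr (le_of_lt hx))
  simpa only [zero_mul, Pi.zero_apply] using h

variable [FiniteDimensional ℝ E] [BorelSpace E] [μ.IsAddHaarMeasure]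

lemma integrable_mul_bump_pow (hk : k ≠ 0) {h : E → ℝ} (hh : Continuous h) :
    Integrable (fun x => h x * bump x ^ k) μ := by
  refine (hh.mul (continuous_bump.pow k)).integrable_of_hasCompactSupport
    (.intro (isCompact_closedBall (0 : E) 1) fun x hx => ?_)
  rw [mem_closedBall_zero_iff, not_le] at hx
  simp only [Pi.mul_apply, Pi.pow_apply, bump_pow_eq_zero hk hx.le, mul_zero]

lemma integrable_comp_mul_bump_pow (hk : k ≠ 0) (hf : Continuous f) :
    Integrable (fun x => f (y + r • x) * bump x ^ k) μ :=
  integrable_mul_bump_pow hk (by fun_prop)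

lemma integrable_bump_pow (hk : k ≠ 0) : Integrable (fun x : E => bump x ^ k) μ := by
  simpa only [one_mul] using integrable_mul_bump_pow (μ := μ) hk (continuous_const (y := (1 : ℝ)))

lemma bumpMass_pos (hk : k ≠ 0) : 0 < bumpMass μ k := by
  refine integral_pos_of_integrable_nonneg_nonzero (x := 0) (continuous_bump.pow k)
    (integrable_bump_pow hk) (fun x => pow_nonneg (bump_nonneg x) k) ?_
  simp [bump]

lemma bumpMean_mono (hk : k ≠ 0) (hf : Continuous f) (hg : Continuous g) (hr : 0 ≤ r)
    (hfg : ∀ x ∈ closedBall y r, f x ≤ g x) : bumpMean μ k f y r ≤ bumpMean μ k g y r :=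
  integral_mono (integrable_comp_mul_bump_pow hk hf) (integrable_comp_mul_bump_pow hk hg)
    fun _ => mul_bump_pow_le_mul_bump_pow hk fun hx =>
      hfg _ (add_smul_mem_closedBall hr hx.le)

lemma bumpMean_succ_le (hk : k ≠ 0) (hf : Continuous f) (hr : 0 ≤ r)
    (hpos : ∀ x ∈ closedBall y r, 0 ≤ f x) :
    bumpMean μ (k + 1) f y r ≤ bumpMean μ k f y r := by
  refine integral_mono (integrable_comp_mul_bump_pow k.succ_ne_zero hf)
    (integrable_comp_mul_bump_pow hk hf) fun x => ?_
  have h := mul_bump_pow_le_mul_bump_pow hk (x := x) (a := f (y + r • x) * bump x)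
    (b := f (y + r • x)) fun hx =>
      mul_le_of_le_one_right (hpos _ (add_smul_mem_closedBall hr hx.le)) (bump_le_one x)
  simpa only [pow_succ', mul_assoc] using h

lemma bumpMean_pos (hk : k ≠ 0) (hf : Continuous f) (hr : 0 ≤ r)
    (hpos : ∀ x ∈ closedBall y r, 0 ≤ f x) (hy : 0 < f y) : 0 < bumpMean μ k f y r := by
  have hnonneg : ∀ x, 0 ≤ f (y + r • x) * bump x ^ k := fun x => by
    have h := mul_bump_pow_le_mul_bump_pow hk (x := x) fun hx =>
      hpos _ (add_smul_mem_closedBall hr (le_of_lt hx))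
    simpa only [zero_mul] using h
  refine integral_pos_of_integrable_nonneg_nonzero (x := 0) ?_
    (integrable_comp_mul_bump_pow hk hf) hnonneg ?_
  · have := continuous_bump (E := E)
    fun_prop
  · simpa [bump] using hy.ne'

end BumpMean

lemma norm_inv_smul_sub {E : Type*} [NormedAddCommGroup E] [NormedSpace ℝ E] {r : ℝ}
    (hr : 0 < r) (x y : E) : ‖r⁻¹ • (x - y)‖ = dist x y / r := by
  rw [norm_smul, norm_inv, Real.norm_of_nonneg hr.le, dist_eq_norm, inv_mul_eq_div]

section Rescaling

variable {E : Type*} [NormedAddCommGroup E] [NormedSpace ℝ E] [FiniteDimensional ℝ E]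
  [MeasurableSpace E] [BorelSpace E] {μ : Measure E} [μ.IsAddHaarMeasure]
  {f : E → ℝ} {y z : E} {r R : ℝ} {j k : ℕ}

lemma bumpMean_eq_integral_rescaled (hr : 0 < r) :
    bumpMean μ k f y r =
      (r ^ Module.finrank ℝ E)⁻¹ * ∫ x, f x * bump (r⁻¹ • (x - y)) ^ k ∂μ := by
  have hscale := Measure.integral_comp_smul_of_nonneg μ
    (fun x => f (y + x) * bump (r⁻¹ • x) ^ k) r (hR := hr.le)
  simp only [inv_smul_smul₀ hr.ne', smul_eq_mul] at hscale
  rw [bumpMean, hscale, ← integral_add_left_eq_self (fun x => f x * bump (r⁻¹ • (x - y)) ^ k) y]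
  simp only [add_sub_cancel_left]

lemma integrable_mul_bump_rescaled (hk : k ≠ 0) (hr : 0 < r) (hf : Continuous f) :
    Integrable (fun x => f x * bump (r⁻¹ • (x - y)) ^ k) μ := by
  have h := ((integrable_comp_mul_bump_pow (μ := μ) (y := y) (r := r) hk hf).comp_smul
    (inv_ne_zero hr.ne')).comp_sub_right y
  simpa only [smul_inv_smul₀ hr.ne', add_sub_cancel] using h

lemma bumpMean_le_bumpMean (hj : j ≠ 0) (hk : k ≠ 0) (hr : 0 < r) (hyz : dist y z + r ≤ R / 2)
    (hf : Continuous f) (hpos : ∀ x ∈ ball z R, 0 ≤ f x) :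
    bumpMean μ j f y r ≤
      (R / r) ^ Module.finrank ℝ E * (4 / 3) ^ k * bumpMean μ k f z R := by
  have hR : 0 < R := by linarith [dist_nonneg (x := y) (y := z)]
  have hdominated : ∀ x, f x * bump (r⁻¹ • (x - y)) ^ j ≤
      (4 / 3) ^ k * (f x * bump (R⁻¹ • (x - z)) ^ k) := by
    intro x
    rcases lt_or_ge (dist x y) r with hx | hx
    · have hxz : dist x z ≤ R / 2 := by linarith [dist_triangle x y z]
      have hfx : 0 ≤ f x := hpos x (mem_ball.2 (by linarith))
      have hbump : 3 / 4 ≤ bump (R⁻¹ • (x - z)) :=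
        three_quarters_le_bump (by rw [norm_inv_smul_sub hR, div_le_iff₀ hR]; linarith)
      calc f x * bump (r⁻¹ • (x - y)) ^ j ≤ f x * 1 := by gcongr; exact bump_pow_le_one j _
        _ ≤ f x * (4 / 3 * bump (R⁻¹ • (x - z))) ^ k := by
            gcongr; exact one_le_pow₀ (by linarith)
        _ = _ := by rw [mul_pow]; ring
    · rw [bump_pow_eq_zero hj (by rwa [norm_inv_smul_sub hr, one_le_div hr]), mul_zero]
      refine mul_nonneg (by positivity) ?_
      have h := mul_bump_pow_le_mul_bump_pow hk (x := R⁻¹ • (x - z)) (a := 0) (b := f x) fun hx =>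
        hpos x (by rwa [norm_inv_smul_sub hR, div_lt_one hR] at hx)
      rwa [zero_mul] at h
  rw [bumpMean_eq_integral_rescaled hr, bumpMean_eq_integral_rescaled hR]
  calc (r ^ Module.finrank ℝ E)⁻¹ * ∫ x, f x * bump (r⁻¹ • (x - y)) ^ j ∂μ
      ≤ (r ^ Module.finrank ℝ E)⁻¹ *
          ∫ x, (4 / 3) ^ k * (f x * bump (R⁻¹ • (x - z)) ^ k) ∂μ := by
        gcongr ?_ * ?_
        exact integral_mono (integrable_mul_bump_rescaled hj hr hf)
          ((integrable_mul_bump_rescaled hk hR hf).const_mul _) hdominated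
    _ = _ := by
        rw [integral_const_mul, div_pow R r]
        field_simp

lemma hasDerivAt_bumpMean_fderiv (hk : k ≠ 0) (hf : ContDiff ℝ 1 f) (y : E) (r : ℝ) :
    HasDerivAt (bumpMean μ k f y) (∫ x, fderiv ℝ f (y + r • x) x * bump x ^ k ∂μ) r := by
  have hcont : Continuous fun q : ℝ × E => fderiv ℝ f (y + q.1 • q.2) q.2 * bump q.2 ^ k := by
    have := hf.continuous_fderiv one_ne_zero
    have := continuous_bump (E := E)
    fun_prop
  obtain ⟨C, hC⟩ := ((isCompact_Icc (a := r - 1) (b := r + 1)).prod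
    (isCompact_closedBall (0 : E) 1)).exists_bound_of_continuousOn hcont.continuousOn
  refine (hasDerivAt_integral_of_dominated_loc_of_deriv_le (s := Set.Icc (r - 1) (r + 1))
    (bound := (closedBall (0 : E) 1).indicator fun _ => C)
    (F := fun r x => f (y + r • x) * bump x ^ k)
    (F' := fun r x => fderiv ℝ f (y + r • x) x * bump x ^ k)
    (Icc_mem_nhds (by linarith) (by linarith)) ?_
    (integrable_comp_mul_bump_pow hk hf.continuous) ?_ ?_ ?_ ?_).2
  · exact .of_forall fun s =>
      (integrable_comp_mul_bump_pow hk hf.continuous).aestronglyMeasurable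
  · exact (hcont.comp (Continuous.prodMk_right r)).aestronglyMeasurable
  · refine .of_forall fun x s hs => ?_
    by_cases hx : x ∈ closedBall (0 : E) 1
    · rw [Set.indicator_of_mem hx]
      exact hC (s, x) ⟨hs, hx⟩
    · rw [Set.indicator_of_notMem hx]
      rw [mem_closedBall_zero_iff, not_le] at hx
      rw [bump_pow_eq_zero hk hx.le, mul_zero, norm_zero]
  · rw [integrable_indicator_iff measurableSet_closedBall]
    exact integrableOn_const measure_closedBall_lt_top.ne
  · refine .of_forall fun x s _ => ?_
    have hray : HasDerivAt (fun s : ℝ => y + s • x) x s := by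
      simpa using ((hasDerivAt_id s).smul_const x).const_add y
    exact ((hf.differentiable one_ne_zero _).hasFDerivAt.comp_hasDerivAt s hray).mul_const _

end Rescaling

section RadialDerivative

variable {E : Type*} [NormedAddCommGroup E] [InnerProductSpace ℝ E] [FiniteDimensional ℝ E]
  [MeasurableSpace E] [BorelSpace E] {μ : Measure E} [μ.IsAddHaarMeasure] {f : E → ℝ} {k : ℕ}

lemma integral_mul_inner_mul_bump_pow (hk : k ≠ 0) {D : E → ℝ} (hD : ContDiff ℝ 1 D)
    (y v : E) (r : ℝ) :
    ∫ x, D (y + r • x) * (inner ℝ x v * bump x ^ k) ∂μ =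
      r / (2 * (k + 1)) * bumpMean μ (k + 1) (fun w => fderiv ℝ D w v) y r := by
  have hcontD := hD.continuous
  have hcontD' : Continuous fun w => fderiv ℝ D w v :=
    (hD.continuous_fderiv one_ne_zero).clm_apply continuous_const
  have hderivD : ∀ x, HasFDerivAt (fun x => D (y + r • x)) (r • fderiv ℝ D (y + r • x)) x := by
    intro x
    have haffine : HasFDerivAt (fun x : E => y + r • x) (r • ContinuousLinearMap.id ℝ E) x :=
      ((hasFDerivAt_id x).const_smul r).const_add y
    refine ((hD.differentiable one_ne_zero _).hasFDerivAt.comp x haffine).congr_fderiv ?_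
    ext w; simp
  have hbump : ∀ x, fderiv ℝ (fun x : E => bump x ^ (k + 1)) x v =
      -(2 * (k + 1)) * (inner ℝ x v * bump x ^ k) := by
    intro x
    rw [(hasFDerivAt_bump_pow hk x).fderiv]
    simp only [smul_apply, innerSL_apply_apply, smul_eq_mul]
    ring
  have ibp := integral_mul_fderiv_eq_neg_fderiv_mul_of_integrable (μ := μ)
    (f := fun x => D (y + r • x)) (g := fun x => bump x ^ (k + 1)) (v := v) ?_ ?_ ?_
    (fun x _ => (hderivD x).differentiableAt)
    (fun x _ => (hasFDerivAt_bump_pow hk x).differentiableAt)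
  · simp only [hbump, (hderivD _).fderiv, smul_apply, smul_eq_mul, mul_left_comm _ (-_ : ℝ),
      mul_assoc r, integral_const_mul] at ibp
    rw [bumpMean, div_mul_eq_mul_div, eq_div_iff (by positivity)]
    linear_combination -ibp
  · simp only [(hderivD _).fderiv, smul_apply, smul_eq_mul, mul_assoc]
    exact (integrable_comp_mul_bump_pow k.succ_ne_zero hcontD').const_mul r
  · simp only [hbump, ← mul_assoc]
    exact integrable_mul_bump_pow hk (by fun_prop)
  · exact integrable_comp_mul_bump_pow k.succ_ne_zero hcontD

end RadialDerivative

section Laplacian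

variable {n : ℕ} {f g : EuclideanSpace ℝ (Fin n) → ℝ}

lemma contDiff_fderiv_apply {E : Type*} [NormedAddCommGroup E] [NormedSpace ℝ E] {f : E → ℝ}
    {m : WithTop ℕ∞} (hf : ContDiff ℝ (m + 1) f) (v : E) :
    ContDiff ℝ m fun y => fderiv ℝ f y v :=
  (hf.fderiv_right le_rfl).clm_apply contDiff_const

lemma continuous_lap (hf : ContDiff ℝ 2 f) : Continuous (lap n f) :=
  continuous_finsetSum _ fun _ _ => (contDiff_fderiv_apply (m := 0)
    (contDiff_fderiv_apply (m := 1) hf _) _).continuous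

lemma lap_neg (f : EuclideanSpace ℝ (Fin n) → ℝ) (x : EuclideanSpace ℝ (Fin n)) :
    lap n (fun y => -f y) x = -lap n f x := by
  simp only [lap, fderiv_fun_neg, neg_apply, Finset.sum_neg_distrib]

lemma lap_add (hf : ContDiff ℝ 2 f) (hg : ContDiff ℝ 2 g) (x : EuclideanSpace ℝ (Fin n)) :
    lap n (fun y => f y + g y) x = lap n f x + lap n g x := by
  have hdiff : ∀ {h : EuclideanSpace ℝ (Fin n) → ℝ}, ContDiff ℝ 2 h → Differentiable ℝ h :=
    fun hh => hh.differentiable two_ne_zero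
  have hdiff' : ∀ {h : EuclideanSpace ℝ (Fin n) → ℝ}, ContDiff ℝ 2 h → ∀ v,
      Differentiable ℝ fun y => fderiv ℝ h y v :=
    fun hh v => (contDiff_fderiv_apply (m := 1) hh v).differentiable one_ne_zero
  simp only [lap, fderiv_fun_add (hdiff hf _) (hdiff hg _), add_apply,
    fderiv_fun_add (hdiff' hf _ _) (hdiff' hg _ _), Finset.sum_add_distrib]

lemma lap_const_sub (c : ℝ) (f : EuclideanSpace ℝ (Fin n) → ℝ) (x : EuclideanSpace ℝ (Fin n)) :
    lap n (fun y => c - f y) x = -lap n f x := by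
  simp only [lap, fderiv_const_sub, fderiv_fun_neg, neg_apply, Finset.sum_neg_distrib]

theorem hasDerivAt_bumpMean {μ : Measure (EuclideanSpace ℝ (Fin n))} [μ.IsAddHaarMeasure]
    {k : ℕ} (hk : k ≠ 0) (hf : ContDiff ℝ 2 f) (y : EuclideanSpace ℝ (Fin n)) (r : ℝ) :
    HasDerivAt (bumpMean μ k f y)
      (r / (2 * (k + 1)) * bumpMean μ (k + 1) (lap n f) y r) r := by
  let e : Fin n → EuclideanSpace ℝ (Fin n) := fun i => EuclideanSpace.single i 1
  let D : Fin n → EuclideanSpace ℝ (Fin n) → ℝ := fun i w => fderiv ℝ f w (e i)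
  have hD : ∀ i, ContDiff ℝ 1 (D i) := fun i => contDiff_fderiv_apply hf _
  refine (hasDerivAt_bumpMean_fderiv hk (hf.of_le one_le_two) y r).congr_deriv ?_
  have hexpand : ∀ w x : EuclideanSpace ℝ (Fin n),
      fderiv ℝ f w x = ∑ i, D i w * inner ℝ x (e i) := by
    intro w x
    conv_lhs => rw [← (EuclideanSpace.basisFun (Fin n) ℝ).sum_repr x]
    simp [D, e, EuclideanSpace.inner_single_right, mul_comm]
  calc ∫ x, fderiv ℝ f (y + r • x) x * bump x ^ k ∂μ
      = ∫ x, ∑ i, D i (y + r • x) * (inner ℝ x (e i) * bump x ^ k) ∂μ := by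
        simp only [hexpand, Finset.sum_mul, mul_assoc]
    _ = ∑ i, ∫ x, D i (y + r • x) * (inner ℝ x (e i) * bump x ^ k) ∂μ := by
        refine integral_finsetSum _ fun i _ => ?_
        have := (hD i).continuous
        simp only [← mul_assoc]
        exact integrable_mul_bump_pow hk (by fun_prop)
    _ = ∑ i, r / (2 * (k + 1)) * bumpMean μ (k + 1) (fun w => fderiv ℝ (D i) w (e i)) y r :=
        Finset.sum_congr rfl fun i _ => integral_mul_inner_mul_bump_pow hk (hD i) y (e i) r
    _ = r / (2 * (k + 1)) * bumpMean μ (k + 1) (lap n f) y r := by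
        rw [← Finset.mul_sum]
        congr 1
        simp only [bumpMean, lap, Finset.sum_mul]
        refine (integral_finsetSum _ fun i _ => ?_).symm
        exact integrable_comp_mul_bump_pow k.succ_ne_zero
          (((hD i).continuous_fderiv one_ne_zero).clm_apply continuous_const)

end Laplacian

lemma sub_le_sub_of_hasDerivAt_le {F G F' G' : ℝ → ℝ} {a b : ℝ} (hab : a ≤ b)
    (hF : ∀ t, HasDerivAt F (F' t) t) (hG : ∀ t, HasDerivAt G (G' t) t)
    (hle : ∀ t ∈ Set.Ico a b, F' t ≤ G' t) : F b - F a ≤ G b - G a :=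
  image_le_of_deriv_right_le_deriv_boundary
    (fun t _ => ((hF t).sub_const (F a)).continuousAt.continuousWithinAt)
    (fun t _ => ((hF t).sub_const (F a)).hasDerivWithinAt) (by simp)
    (fun t _ => ((hG t).sub_const (G a)).continuousAt.continuousWithinAt)
    (fun t _ => ((hG t).sub_const (G a)).hasDerivWithinAt) hle (Set.right_mem_Icc.2 hab)

section MeanInequalities

variable {n : ℕ} {μ : Measure (EuclideanSpace ℝ (Fin n))} [μ.IsAddHaarMeasure] {k : ℕ}
  {f u : EuclideanSpace ℝ (Fin n) → ℝ} {y z : EuclideanSpace ℝ (Fin n)} {κ lam r : ℝ}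

lemma bumpMean_le_of_lap_le (hk : k ≠ 0) (hf : ContDiff ℝ 2 f) (hr : 0 ≤ r) (hκ : 0 ≤ κ)
    (hlap : ∀ x ∈ closedBall y r, lap n f x ≤ κ) :
    bumpMean μ k f y r ≤ bumpMass μ k * (f y + κ * r ^ 2 / (4 * (k + 1))) := by
  have hquad : ∀ t : ℝ, HasDerivAt (fun t => κ * bumpMass μ k / (4 * (k + 1)) * t ^ 2)
      (t / (2 * (k + 1)) * (κ * bumpMass μ k)) t := fun t =>
    ((hasDerivAt_pow 2 t).const_mul _).congr_deriv (by norm_num; field_simp; ring)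
  have hgrowth := sub_le_sub_of_hasDerivAt_le hr (hasDerivAt_bumpMean (μ := μ) hk hf y) hquad
    fun t ht => by
      have hcompare : bumpMean μ (k + 1) (lap n f) y t ≤ κ * bumpMass μ k :=
        calc bumpMean μ (k + 1) (lap n f) y t ≤ bumpMean μ (k + 1) (fun _ => κ) y t :=
              bumpMean_mono k.succ_ne_zero (continuous_lap hf) continuous_const ht.1
                fun x hx => hlap x (closedBall_subset_closedBall ht.2.le hx)
          _ ≤ bumpMean μ k (fun _ => κ) y t :=
              bumpMean_succ_le hk continuous_const ht.1 fun _ _ => hκ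
          _ = κ * bumpMass μ k := bumpMean_const κ
      have := ht.1
      gcongr
  rw [bumpMean_zero_radius] at hgrowth
  linear_combination hgrowth

lemma le_bumpMean_of_le_lap (hk : k ≠ 0) (hf : ContDiff ℝ 2 f) (hr : 0 ≤ r) (hκ : 0 ≤ κ)
    (hlap : ∀ x ∈ closedBall y r, -κ ≤ lap n f x) :
    bumpMass μ k * (f y - κ * r ^ 2 / (4 * (k + 1))) ≤ bumpMean μ k f y r := by
  have h := bumpMean_le_of_lap_le (μ := μ) hk hf.neg hr hκ fun x hx => by
    simpa only [Pi.neg_def, lap_neg] using neg_le.1 (hlap x hx)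
  simp only [bumpMean_neg] at h
  linarith

lemma bumpMass_mul_le_exp_mul_bumpMean (hk : k ≠ 0) (hu : ContDiff ℝ 2 u) (hr : 0 ≤ r)
    (hlam : 0 ≤ lam) (hpos : ∀ x ∈ closedBall y r, 0 ≤ u x)
    (hlap : ∀ x ∈ closedBall y r, -lam * u x ≤ lap n u x) :
    bumpMass μ k * u y ≤ exp (lam * r ^ 2 / (4 * (k + 1))) * bumpMean μ k u y r := by
  have hexp : ∀ t : ℝ, HasDerivAt (fun t => exp (lam * t ^ 2 / (4 * (k + 1))))
      (exp (lam * t ^ 2 / (4 * (k + 1))) * (lam * t / (2 * (k + 1)))) t := fun t =>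
    ((((hasDerivAt_pow 2 t).const_mul lam).div_const _).exp).congr_deriv
      (by norm_num; field_simp; ring)
  have hmono := sub_le_sub_of_hasDerivAt_le hr (fun t => hasDerivAt_const t (0 : ℝ))
    (fun t => (hexp t).mul (hasDerivAt_bumpMean (μ := μ) hk hu y t)) fun t ht => by
      have hsub : closedBall y t ⊆ closedBall y r := closedBall_subset_closedBall ht.2.le
      have hcompare : -lam * bumpMean μ k u y t ≤ bumpMean μ (k + 1) (lap n u) y t :=
        calc -lam * bumpMean μ k u y t ≤ -lam * bumpMean μ (k + 1) u y t :=
              mul_le_mul_of_nonpos_left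
                (bumpMean_succ_le hk hu.continuous ht.1 fun x hx => hpos x (hsub hx))
                (neg_nonpos.2 hlam)
          _ = bumpMean μ (k + 1) (fun x => -lam * u x) y t := (bumpMean_const_mul _).symm
          _ ≤ _ := bumpMean_mono k.succ_ne_zero (continuous_const.mul hu.continuous)
              (continuous_lap hu) ht.1 fun x hx => hlap x (hsub hx)
      have hfactor : 0 ≤ exp (lam * t ^ 2 / (4 * (k + 1))) * (t / (2 * (k + 1))) *
          (bumpMean μ (k + 1) (lap n u) y t - -lam * bumpMean μ k u y t) :=
        mul_nonneg (mul_nonneg (exp_nonneg _) (div_nonneg ht.1 (by positivity)))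
          (sub_nonneg.2 hcompare)
      linear_combination hfactor
  simp only [Pi.mul_apply, bumpMean_zero_radius, zero_pow two_ne_zero, mul_zero, zero_div,
    exp_zero, one_mul, sub_self, sub_nonneg] at hmono
  rwa [mul_comm]

theorem le_of_nonneg_of_lap_le (hu : ContDiff ℝ 2 u) (hr : 0 < r) (hlam : 0 ≤ lam)
    (hlamr : lam * r ^ 2 ≤ 1) (hκ : 0 ≤ κ) (hpos : ∀ x ∈ closedBall z r, 0 ≤ u x)
    (hlower : ∀ x ∈ closedBall z r, -lam * u x ≤ lap n u x)
    (hupper : ∀ x ∈ closedBall z r, lap n u x ≤ κ) (hy : y ∈ closedBall z (r / 4)) :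
    u y ≤ 2 * 4 ^ n * (u z + κ * r ^ 2 / 8) := by
  have hdist : dist y z ≤ r / 4 := hy
  have hsub : closedBall y (r / 4) ⊆ closedBall z r :=
    closedBall_subset_closedBall' (by linarith)
  have hexp : exp (lam * (r / 4) ^ 2 / (4 * ((1 : ℕ) + 1))) ≤ 3 / 2 := by
    have hsmall : lam * (r / 4) ^ 2 / (4 * ((1 : ℕ) + 1)) ≤ log (3 / 2) := by
      have := one_sub_inv_le_log_of_pos (x := 3 / 2) (by norm_num)
      push_cast
      linarith
    exact (exp_le_exp.2 hsmall).trans_eq (exp_log (by norm_num))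
  have hA : 0 ≤ bumpMean volume 1 u y (r / 4) :=
    bumpMean_nonneg (by linarith) one_ne_zero fun x hx => hpos x (hsub hx)
  have hscaled : bumpMass volume 1 * u y ≤
      bumpMass volume 1 * (2 * 4 ^ n * (u z + κ * r ^ 2 / 8)) :=
    calc bumpMass volume 1 * u y
        ≤ exp (lam * (r / 4) ^ 2 / (4 * ((1 : ℕ) + 1))) * bumpMean volume 1 u y (r / 4) :=
          bumpMass_mul_le_exp_mul_bumpMean one_ne_zero hu (by linarith) hlam
            (fun x hx => hpos x (hsub hx)) fun x hx => hlower x (hsub hx)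
      _ ≤ 3 / 2 * ((r / (r / 4)) ^ Module.finrank ℝ (EuclideanSpace ℝ (Fin n)) * (4 / 3) ^ 1 *
            bumpMean volume 1 u z r) := by
          gcongr
          exact bumpMean_le_bumpMean one_ne_zero one_ne_zero (by linarith) (by linarith)
            hu.continuous fun x hx => hpos x (ball_subset_closedBall hx)
      _ = 2 * 4 ^ n * bumpMean volume 1 u z r := by
          rw [finrank_euclideanSpace_fin, div_div_cancel₀ hr.ne']
          ring
      _ ≤ 2 * 4 ^ n * (bumpMass volume 1 * (u z + κ * r ^ 2 / (4 * ((1 : ℕ) + 1)))) := by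
          gcongr
          exact bumpMean_le_of_lap_le one_ne_zero hu hr.le hκ hupper
      _ = bumpMass volume 1 * (2 * 4 ^ n * (u z + κ * r ^ 2 / 8)) := by push_cast; ring
  exact le_of_mul_le_mul_left hscaled (bumpMass_pos one_ne_zero)

theorem abs_le_of_eigenfunction_of_eq_zero {ψ : EuclideanSpace ℝ (Fin n) → ℝ} {M : ℝ}
    (hψ : ContDiff ℝ 2 ψ) (hr : 0 < r) (hlam : 0 ≤ lam) (hlamr : lam * r ^ 2 ≤ 1)
    (hlap : ∀ x, lap n ψ x = -lam * ψ x) (hz : ψ z = 0)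
    (hM : ∀ x ∈ closedBall z r, ψ x ≤ M) (hy : y ∈ closedBall z (r / 4)) :
    |ψ y| ≤ 3 * 4 ^ n * M := by
  have hM0 : 0 ≤ M := hz ▸ hM z (mem_closedBall_self hr.le)
  have hpow : (1 : ℝ) ≤ 4 ^ n := one_le_pow₀ (by norm_num)
  have hharnack : M - ψ y ≤ 2 * 4 ^ n * (M - ψ z + lam * M * r ^ 2 / 8) := by
    refine le_of_nonneg_of_lap_le (u := fun x => M - ψ x) (contDiff_const.sub hψ) hr hlam hlamr
      (mul_nonneg hlam hM0) (fun x hx => sub_nonneg.2 (hM x hx)) (fun x _ => ?_)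
      (fun x hx => ?_) hy <;> rw [lap_const_sub, hlap]
    · linarith [mul_nonneg hlam hM0]
    · linarith [mul_le_mul_of_nonneg_left (hM x hx) hlam]
  have hsmall : lam * M * r ^ 2 ≤ M := by
    linarith [mul_le_mul_of_nonneg_right hlamr hM0]
  have hbound : 2 * 4 ^ n * (M - ψ z + lam * M * r ^ 2 / 8) ≤ 2 * 4 ^ n * (9 / 8 * M) := by
    gcongr
    linarith
  have hpowM : M ≤ 4 ^ n * M := le_mul_of_one_le_left hM0 hpow
  have hup := hM y (closedBall_subset_closedBall (by linarith) hy)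
  exact abs_le.2 ⟨by linarith, by linarith⟩

end MeanInequalities

section PositiveSupersolution

variable {n : ℕ} {u : EuclideanSpace ℝ (Fin n) → ℝ} {y : EuclideanSpace ℝ (Fin n)} {lam ρ : ℝ}

lemma bumpMean_half_radius_le {μ : Measure (EuclideanSpace ℝ (Fin n))} [μ.IsAddHaarMeasure]
    {s : ℝ} (hs : 0 < s) (hu : Continuous u) (hpos : ∀ x ∈ ball y s, 0 ≤ u x) :
    bumpMean μ 1 u y (s / 2) ≤ 2 ^ n * (16 / 9) * bumpMean μ 2 u y s := by
  have h := bumpMean_le_bumpMean (μ := μ) (y := y) (z := y) one_ne_zero two_ne_zero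
    (half_pos hs) (by rw [dist_self, zero_add]) hu hpos
  rw [finrank_euclideanSpace_fin, div_div_cancel₀ hs.ne'] at h
  norm_num at h ⊢
  exact h

lemma bumpMean_antitoneOn_of_lap_nonpos {μ : Measure (EuclideanSpace ℝ (Fin n))}
    [μ.IsAddHaarMeasure] {k : ℕ} (hk : k ≠ 0) (hu : ContDiff ℝ 2 u)
    (hlap : ∀ x ∈ closedBall y ρ, lap n u x ≤ 0) :
    AntitoneOn (bumpMean μ k u y) (Set.Icc 0 ρ) := by
  intro a ha b hb hab
  have h := sub_le_sub_of_hasDerivAt_le hab (hasDerivAt_bumpMean (μ := μ) hk hu y)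
    (fun t => hasDerivAt_const t (0 : ℝ)) fun t ht => by
      have ht0 : 0 ≤ t := ha.1.trans ht.1
      have htρ : t ≤ ρ := ht.2.le.trans hb.2
      refine mul_nonpos_of_nonneg_of_nonpos (by positivity) ?_
      simpa only [zero_mul, bumpMean_const] using
        bumpMean_mono k.succ_ne_zero (continuous_lap hu) continuous_const ht0
          (g := fun _ => 0) fun x hx => hlap x (closedBall_subset_closedBall htρ hx)
  simpa using h

lemma bumpMean_sub_half_radius_le (μ : Measure (EuclideanSpace ℝ (Fin n))) [μ.IsAddHaarMeasure]
    (hu : ContDiff ℝ 2 u) (hρ : 0 < ρ) (hlam : 0 ≤ lam) (hpos : ∀ x ∈ closedBall y ρ, 0 ≤ u x)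
    (hlap : ∀ x ∈ closedBall y ρ, lap n u x ≤ -lam * u x) :
    bumpMean μ 1 u y ρ - bumpMean μ 1 u y (ρ / 2) ≤
      -(27 / 512 * (lam * ρ ^ 2) / 2 ^ n * bumpMean μ 1 u y (ρ / 2)) := by
  set a := bumpMean μ 1 u y (ρ / 2)
  have hanti := bumpMean_antitoneOn_of_lap_nonpos (μ := μ) one_ne_zero hu fun x hx =>
    (hlap x hx).trans (by nlinarith [hpos x hx])
  have hderiv : ∀ t ∈ Set.Ico (ρ / 2) ρ, bumpMean μ 2 (lap n u) y t ≤
      -(9 / 16 * lam / 2 ^ n * a) := by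
    intro t ht
    have ht0 : 0 < t := (half_pos hρ).trans_le ht.1
    have hsub : closedBall y t ⊆ closedBall y ρ := closedBall_subset_closedBall ht.2.le
    have hhalf : a ≤ 2 ^ n * (16 / 9) * bumpMean μ 2 u y t :=
      (hanti ⟨by linarith, by linarith [ht.2]⟩ ⟨by linarith, by linarith⟩
        (by linarith [ht.2])).trans (bumpMean_half_radius_le ht0 hu.continuous fun x hx =>
          hpos x (hsub (ball_subset_closedBall hx)))
    calc bumpMean μ 2 (lap n u) y t ≤ bumpMean μ 2 (fun x => -lam * u x) y t :=
          bumpMean_mono two_ne_zero (continuous_lap hu) (continuous_const.mul hu.continuous)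
            ht0.le fun x hx => hlap x (hsub hx)
      _ = -(lam * bumpMean μ 2 u y t) := by rw [bumpMean_const_mul, neg_mul]
      _ ≤ -(lam * (a / (2 ^ n * (16 / 9)))) := by
          gcongr
          rwa [div_le_iff₀' (by positivity)]
      _ = -(9 / 16 * lam / 2 ^ n * a) := by field_simp
  have hquad : ∀ t, HasDerivAt (fun t => -(9 / 16 * lam / 2 ^ n * a) * (t ^ 2 / 8))
      (t / 4 * -(9 / 16 * lam / 2 ^ n * a)) t := fun t =>
    (((hasDerivAt_pow 2 t).div_const 8).const_mul _).congr_deriv (by norm_num; ring)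
  have h := sub_le_sub_of_hasDerivAt_le (half_le_self hρ.le)
    (hasDerivAt_bumpMean (μ := μ) one_ne_zero hu y) hquad fun t ht => by
      have : 0 ≤ t := by linarith [ht.1]
      rw [show (2 : ℝ) * ((1 : ℕ) + 1) = 4 by norm_num]
      gcongr
      exact hderiv t ht
  linear_combination h

theorem mul_sq_le_of_pos_of_lap_le (hu : ContDiff ℝ 2 u) (hρ : 0 < ρ) (hlam : 0 ≤ lam)
    (hpos : ∀ x ∈ closedBall y ρ, 0 ≤ u x) (hy : 0 < u y)
    (hlap : ∀ x ∈ closedBall y ρ, lap n u x ≤ -lam * u x) : lam * ρ ^ 2 ≤ 19 * 2 ^ n := by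
  have hmean : 0 < bumpMean volume 1 u y (ρ / 2) :=
    bumpMean_pos one_ne_zero hu.continuous (half_pos hρ).le
      (fun x hx => hpos x (closedBall_subset_closedBall (half_le_self hρ.le) hx)) hy
  have hmean' : 0 ≤ bumpMean volume 1 u y ρ := bumpMean_nonneg hρ.le one_ne_zero hpos
  have hdecay := bumpMean_sub_half_radius_le volume hu hρ hlam hpos hlap
  have hle : 27 / 512 * (lam * ρ ^ 2) / 2 ^ n ≤ 1 :=
    le_of_mul_le_mul_right (by linarith) hmean
  rw [div_le_one (by positivity)] at hle
  linarith [pow_pos (two_pos (α := ℝ)) n]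

end PositiveSupersolution

lemma nonneg_of_isPreconnected_of_ne_zero {X : Type*} [TopologicalSpace X] {f : X → ℝ} {s : Set X}
    {a b : X} (hs : IsPreconnected s) (hf : ContinuousOn f s) (hne : ∀ x ∈ s, f x ≠ 0)
    (ha : a ∈ s) (hb : b ∈ s) (hfa : 0 ≤ f a) : 0 ≤ f b := by
  by_contra! hfb
  obtain ⟨x, hx, hx0⟩ := hs.intermediate_value hb ha hf ⟨hfb.le, hfa⟩
  exact hne x hx hx0

theorem exists_mem_closedBall_eq_zero {n : ℕ} {ψ : EuclideanSpace ℝ (Fin n) → ℝ}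
    {p : EuclideanSpace ℝ (Fin n)} {lam ρ : ℝ} (hψ : ContDiff ℝ 2 ψ) (hρ : 0 < ρ)
    (hlam : 0 ≤ lam) (hlap : ∀ x ∈ closedBall p ρ, lap n ψ x = -lam * ψ x)
    (hlarge : 19 * 2 ^ n < lam * ρ ^ 2) : ∃ w ∈ closedBall p ρ, ψ w = 0 := by
  by_contra! hne
  have hp : p ∈ closedBall p ρ := mem_closedBall_self hρ.le
  have hconn := (convex_closedBall p ρ).isPreconnected
  rcases (hne p hp).lt_or_gt with hneg | hpos
  · refine hlarge.not_ge (mul_sq_le_of_pos_of_lap_le (u := fun x => -ψ x) hψ.neg hρ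
      hlam (fun x hx => ?_) (neg_pos.2 hneg) fun x hx => ?_)
    · exact nonneg_of_isPreconnected_of_ne_zero (f := fun x => -ψ x) hconn
        hψ.continuous.neg.continuousOn (fun w hw => neg_ne_zero.2 (hne w hw)) hp hx
        (neg_pos.2 hneg).le
    · rw [lap_neg, hlap x hx, mul_neg]
  · exact hlarge.not_ge (mul_sq_le_of_pos_of_lap_le hψ hρ hlam
      (fun x hx => nonneg_of_isPreconnected_of_ne_zero hconn hψ.continuous.continuousOn hne hp hx
        hpos.le) hpos fun x hx => (hlap x hx).le)

section Density

variable {E : Type*} [NormedAddCommGroup E] [MeasurableSpace E]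

/-- The proportion of the ball of radius `r` about `x` that lies in `P`. -/
def ballDensity (μ : Measure E) (P : Set E) (x : E) (r : ℝ) : ℝ :=
  μ.real (P ∩ ball x r) / μ.real (ball x r)

variable [NormedSpace ℝ E] [FiniteDimensional ℝ E] {μ : Measure E} [μ.IsAddHaarMeasure]
  {P : Set E} {x y : E} {r : ℝ}

lemma measureReal_ball_pos (hr : 0 < r) : 0 < μ.real (ball x r) :=
  ENNReal.toReal_pos (measure_ball_pos μ x hr).ne' measure_ball_lt_top.ne

lemma measure_inter_ball_ne_top : μ (P ∩ ball x r) ≠ ⊤ :=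
  ((measure_mono Set.inter_subset_right).trans_lt measure_ball_lt_top).ne

lemma ballDensity_mul (hr : 0 < r) :
    ballDensity μ P x r * μ.real (ball x r) = μ.real (P ∩ ball x r) :=
  div_mul_cancel₀ _ (measureReal_ball_pos hr).ne'

variable [BorelSpace E]

lemma measureReal_ball (hr : 0 < r) :
    μ.real (ball x r) = r ^ Module.finrank ℝ E * μ.real (ball (0 : E) 1) := by
  simp only [measureReal_def, Measure.addHaar_ball_of_pos μ x hr, ENNReal.toReal_mul,
    ENNReal.toReal_ofReal (pow_nonneg hr.le _)]

lemma bumpMean_le_ballDensity {k : ℕ} {f : E → ℝ} {M : ℝ} (hk : k ≠ 0) (hr : 0 < r)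
    (hf : Continuous f) (hle : ∀ x ∈ ball y r, f x ≤ M) :
    bumpMean μ k f y r ≤ M * μ.real (ball (0 : E) 1) * ballDensity μ {x | 0 ≤ f x} y r := by
  have hmeas : MeasurableSet ({x | 0 ≤ f x} ∩ ball y r) :=
    (isClosed_le continuous_const hf).measurableSet.inter measurableSet_ball
  have hpoint : ∀ x, f x * bump (r⁻¹ • (x - y)) ^ k ≤
      ({x | 0 ≤ f x} ∩ ball y r).indicator (fun _ => M) x := by
    intro x
    by_cases hx : x ∈ {x | 0 ≤ f x} ∩ ball y r
    · rw [Set.indicator_of_mem hx]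
      exact (mul_le_of_le_one_right hx.1 (bump_pow_le_one k _)).trans (hle x hx.2)
    · rw [Set.indicator_of_notMem hx, ← zero_mul (bump (r⁻¹ • (x - y)) ^ k)]
      refine mul_bump_pow_le_mul_bump_pow hk fun hxr => le_of_not_ge fun h0 => hx ⟨h0, ?_⟩
      rwa [norm_inv_smul_sub hr, div_lt_one hr] at hxr
  have hintegral : ∫ x, f x * bump (r⁻¹ • (x - y)) ^ k ∂μ ≤
      μ.real ({x | 0 ≤ f x} ∩ ball y r) * M := by
    rw [← smul_eq_mul, ← setIntegral_const, ← integral_indicator hmeas]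
    exact integral_mono (integrable_mul_bump_rescaled hk hr hf)
      ((integrable_indicator_iff hmeas).2 (integrableOn_const
        measure_inter_ball_ne_top)) hpoint
  calc bumpMean μ k f y r
      = (r ^ Module.finrank ℝ E)⁻¹ * ∫ x, f x * bump (r⁻¹ • (x - y)) ^ k ∂μ :=
        bumpMean_eq_integral_rescaled hr
    _ ≤ (r ^ Module.finrank ℝ E)⁻¹ * (μ.real ({x | 0 ≤ f x} ∩ ball y r) * M) := by gcongr
    _ = M * μ.real (ball (0 : E) 1) * ballDensity μ {x | 0 ≤ f x} y r := by
        rw [← ballDensity_mul hr, measureReal_ball hr]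
        field_simp

theorem bumpMass_mul_le_ballDensity {n : ℕ} {μ : Measure (EuclideanSpace ℝ (Fin n))}
    [μ.IsAddHaarMeasure] {f : EuclideanSpace ℝ (Fin n) → ℝ} {y : EuclideanSpace ℝ (Fin n)}
    {M κ r : ℝ} (hf : ContDiff ℝ 2 f) (hr : 0 < r) (hκ : 0 ≤ κ)
    (hle : ∀ x ∈ ball y r, f x ≤ M) (hlap : ∀ x ∈ closedBall y r, -κ ≤ lap n f x)
    (hsmall : κ * r ^ 2 ≤ 4 * f y) :
    bumpMass μ 1 * f y ≤
      2 * M * (μ.real (ball 0 1) * ballDensity μ {x | 0 ≤ f x} y r) := by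
  have hlower := le_bumpMean_of_le_lap (μ := μ) one_ne_zero hf hr.le hκ hlap
  have hupper := bumpMean_le_ballDensity (μ := μ) one_ne_zero hr hf.continuous hle
  have hhalf : bumpMass μ 1 * (f y / 2) ≤
      bumpMass μ 1 * (f y - κ * r ^ 2 / (4 * ((1 : ℕ) + 1))) := by
    have := bumpMass_pos (μ := μ) one_ne_zero
    gcongr
    push_cast
    linarith
  linarith

lemma ballDensity_mono {z p : E} {R : ℝ} (hr : 0 < r) (hR : 0 < R) (hsub : ball z r ⊆ ball p R) :
    (r / R) ^ Module.finrank ℝ E * ballDensity μ P z r ≤ ballDensity μ P p R := by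
  refine le_of_mul_le_mul_right ?_ (measureReal_ball_pos (μ := μ) (x := p) hR)
  calc (r / R) ^ Module.finrank ℝ E * ballDensity μ P z r * μ.real (ball p R)
      = ballDensity μ P z r * μ.real (ball z r) := by
        rw [measureReal_ball hr, measureReal_ball hR, div_pow]
        field_simp
    _ = μ.real (P ∩ ball z r) := ballDensity_mul hr
    _ ≤ μ.real (P ∩ ball p R) := measureReal_mono (Set.inter_subset_inter_right _ hsub)
        measure_inter_ball_ne_top
    _ = ballDensity μ P p R * μ.real (ball p R) := (ballDensity_mul hR).symm

lemma card_mul_le_ballDensity {ι : Type*} {s : Finset ι} {c : ι → E} {θ δ ρ : ℝ} {z : E}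
    (hP : MeasurableSet P) (hδ : 0 < δ) (hρ : 0 < ρ) (hsub : ∀ i ∈ s, ball (c i) δ ⊆ ball z ρ)
    (hdisj : (s : Set ι).PairwiseDisjoint fun i => ball (c i) δ)
    (hθ : ∀ i ∈ s, θ ≤ ballDensity μ P (c i) δ) :
    s.card * (θ * (δ / ρ) ^ Module.finrank ℝ E) ≤ ballDensity μ P z ρ := by
  refine le_of_mul_le_mul_right ?_ (measureReal_ball_pos (μ := μ) (x := z) hρ)
  calc s.card * (θ * (δ / ρ) ^ Module.finrank ℝ E) * μ.real (ball z ρ)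
      = ∑ i ∈ s, θ * μ.real (ball (c i) δ) := by
        simp only [measureReal_ball hδ, measureReal_ball hρ, Finset.sum_const, nsmul_eq_mul,
          div_pow]
        field_simp
    _ ≤ ∑ i ∈ s, μ.real (P ∩ ball (c i) δ) := Finset.sum_le_sum fun i hi => by
        rw [← ballDensity_mul hδ]
        gcongr
        exact hθ i hi
    _ = μ.real (⋃ i ∈ s, P ∩ ball (c i) δ) :=
        (measureReal_biUnion_finset
          (hdisj.mono fun i => Set.inter_subset_right) (fun i _ => hP.inter measurableSet_ball)
          fun i _ => measure_inter_ball_ne_top).symm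
    _ ≤ μ.real (P ∩ ball z ρ) := measureReal_mono
        (Set.iUnion₂_subset fun i hi => Set.inter_subset_inter_right _ (hsub i hi))
        measure_inter_ball_ne_top
    _ = ballDensity μ P z ρ * μ.real (ball z ρ) := (ballDensity_mul hρ).symm

end Density

section Averaging

variable {E : Type*} [NormedAddCommGroup E] [NormedSpace ℝ E] [FiniteDimensional ℝ E]
  [MeasurableSpace E] [BorelSpace E] {μ : Measure E} [μ.IsAddHaarMeasure] {P : Set E}

lemma mul_measure_ball_le_of_forall_le {v : ENNReal} {r ρ : ℝ}
    (hv : ∀ x, v ≤ μ (P ∩ ball x ρ)) (p : E) :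
    v * μ (ball p r) ≤ μ (ball 0 ρ) * μ (P ∩ ball p (r + ρ)) := by
  let T := P ∩ ball p (r + ρ)
  have hnear : MeasurableSet {q : E × E | dist q.2 q.1 < ρ} :=
    measurableSet_lt (measurable_snd.dist measurable_fst) measurable_const
  calc v * μ (ball p r) = ∫⁻ _ in ball p r, v ∂μ := (setLIntegral_const _ v).symm
    _ ≤ ∫⁻ x in ball p r, μ.restrict T (ball x ρ) ∂μ := by
        refine setLIntegral_mono' measurableSet_ball fun x hx => (hv x).trans ?_
        rw [Measure.restrict_apply measurableSet_ball]
        refine measure_mono fun y hy => ⟨hy.2, hy.1, ?_⟩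
        have := dist_triangle y x p
        have hyx : dist y x < ρ := hy.2
        have hxp : dist x p < r := hx
        exact mem_ball.2 (by linarith)
    _ = ((μ.restrict (ball p r)).prod (μ.restrict T)) {q | dist q.2 q.1 < ρ} :=
        (Measure.prod_apply hnear).symm
    _ = ∫⁻ y in T, μ.restrict (ball p r) {x | dist y x < ρ} ∂μ := Measure.prod_apply_symm hnear
    _ ≤ ∫⁻ _ in T, μ (ball 0 ρ) ∂μ := by
        refine lintegral_mono fun y => (Measure.restrict_apply_le _ _).trans_eq ?_
        rw [← Measure.addHaar_ball_center μ y ρ]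
        simp only [ball, dist_comm]
    _ = μ (ball 0 ρ) * μ T := setLIntegral_const _ _

lemma le_ballDensity_of_forall_le {v ρ R : ℝ} (hρ : 0 < ρ) (hR : 2 * ρ ≤ R)
    (hv : ∀ x, v ≤ ballDensity μ P x ρ) (p : E) :
    v / 2 ^ Module.finrank ℝ E ≤ ballDensity μ P p R := by
  have hR0 : 0 < R := by linarith
  have hlower : ∀ x, ENNReal.ofReal (v * μ.real (ball (0 : E) ρ)) ≤ μ (P ∩ ball x ρ) := by
    intro x
    rw [ENNReal.ofReal_le_iff_le_toReal measure_inter_ball_ne_top]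
    change _ ≤ μ.real (P ∩ ball x ρ)
    rw [← ballDensity_mul hρ, measureReal_ball hρ, measureReal_ball (x := x) hρ]
    gcongr
    exact hv x
  have hfubini := (mul_measure_ball_le_of_forall_le (r := R / 2) hlower p).trans
    (mul_le_mul_right (measure_mono (Set.inter_subset_inter_right P
      (ball_subset_ball (by linarith : R / 2 + ρ ≤ R)))) _)
  have hreal := ENNReal.toReal_mono
    (ENNReal.mul_ne_top measure_ball_lt_top.ne measure_inter_ball_ne_top) hfubini
  rw [ENNReal.toReal_mul, ENNReal.toReal_mul, ENNReal.toReal_ofReal'] at hreal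
  have hcancel : v * μ.real (ball p (R / 2)) ≤ μ.real (P ∩ ball p R) := by
    refine le_of_mul_le_mul_left ?_ (measureReal_ball_pos (μ := μ) (x := 0) hρ)
    calc μ.real (ball (0 : E) ρ) * (v * μ.real (ball p (R / 2)))
        = v * μ.real (ball (0 : E) ρ) * μ.real (ball p (R / 2)) := by ring
      _ ≤ max (v * μ.real (ball (0 : E) ρ)) 0 * μ.real (ball p (R / 2)) := by
          gcongr
          exact le_max_left _ _
      _ ≤ _ := hreal
  rw [ballDensity, le_div_iff₀ (measureReal_ball_pos hR0), measureReal_ball hR0]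
  refine le_trans (le_of_eq ?_) hcancel
  rw [measureReal_ball (half_pos hR0), div_pow]
  field_simp

end Averaging

section MaximumPrinciple

lemma deriv_deriv_nonpos_of_isLocalMax {φ : ℝ → ℝ} {a : ℝ} (hmax : IsLocalMax φ a)
    (hcont : ContinuousAt φ a) : deriv (deriv φ) a ≤ 0 := by
  by_contra! hpos
  have hmin := isLocalMin_of_deriv_deriv_pos hpos hmax.deriv_eq_zero hcont
  have hconst : φ =ᶠ[nhds a] fun _ => φ a := by
    filter_upwards [hmax, hmin] with s hle hge using le_antisymm hle hge
  have hzero := hconst.deriv.deriv_eq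
  rw [deriv_const', deriv_const] at hzero
  exact hpos.ne' hzero

variable {n : ℕ} {f : EuclideanSpace ℝ (Fin n) → ℝ} {z y : EuclideanSpace ℝ (Fin n)} {κ t : ℝ}

lemma lap_nonpos_of_isLocalMax (hf : ContDiff ℝ 2 f) (hmax : IsLocalMax f y) :
    lap n f y ≤ 0 := by
  refine Finset.sum_nonpos fun i _ => ?_
  set e := EuclideanSpace.single i (1 : ℝ)
  have hline : ∀ s : ℝ, HasDerivAt (fun s : ℝ => y + s • e) e s := fun s => by
    simpa using ((hasDerivAt_id s).smul_const e).const_add y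
  have hderiv : ∀ {g : EuclideanSpace ℝ (Fin n) → ℝ}, ContDiff ℝ 1 g → ∀ s : ℝ,
      HasDerivAt (fun s : ℝ => g (y + s • e)) (fderiv ℝ g (y + s • e) e) s := fun hg s =>
    (hg.differentiable one_ne_zero _).hasFDerivAt.comp_hasDerivAt s (hline s)
  have hfirst := hderiv (hf.of_le one_le_two)
  have hsecond := hderiv (contDiff_fderiv_apply hf e) 0
  have hlocal : IsLocalMax (fun s : ℝ => f (y + s • e)) 0 :=
    IsLocalMax.comp_continuous (g := fun s : ℝ => y + s • e) (by simpa using hmax) (by fun_prop)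
  have h := deriv_deriv_nonpos_of_isLocalMax hlocal (hfirst 0).continuousAt
  rw [funext fun s => (hfirst s).deriv, hsecond.deriv] at h
  simpa using h

lemma lap_const_mul_norm_sub_sq (c : ℝ) (z x : EuclideanSpace ℝ (Fin n)) :
    lap n (fun y => c * ‖y - z‖ ^ 2) x = 2 * c * n := by
  have hsub : ∀ y, HasFDerivAt (fun y => y - z) (.id ℝ (EuclideanSpace ℝ (Fin n))) y :=
    fun y => (hasFDerivAt_id y).sub_const z
  have hfirst : ∀ y v, fderiv ℝ (fun y => c * ‖y - z‖ ^ 2) y v = 2 * c * inner ℝ (y - z) v := by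
    intro y v
    rw [((hsub y).norm_sq.const_mul c).fderiv]
    simp only [map_sub, ContinuousLinearMap.comp_id, smul_apply, sub_apply, coe_innerSL_apply,
      nsmul_eq_mul, Nat.cast_ofNat, smul_eq_mul, inner_sub_left]
    ring
  have hsecond : ∀ v : EuclideanSpace ℝ (Fin n),
      fderiv ℝ (fun y => 2 * c * inner ℝ (y - z) v) x v = 2 * c * ‖v‖ ^ 2 := by
    intro v
    rw [(((hsub x).inner ℝ (hasFDerivAt_const v x)).const_mul (2 * c)).fderiv]
    simp
  simp only [lap, hfirst, hsecond, PiLp.norm_single, norm_one, one_pow, mul_one,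
    Finset.sum_const, Finset.card_univ, Fintype.card_fin, nsmul_eq_mul]
  ring

theorem exists_dist_eq_forall_le_of_le_lap (hn : n ≠ 0) (hf : ContDiff ℝ 2 f) (hκ : 0 < κ)
    (ht : 0 ≤ t) (hlap : ∀ x ∈ ball z t, -κ ≤ lap n f x) :
    ∃ y, dist y z = t ∧ ∀ x ∈ closedBall z t, f x ≤ f y + κ * t ^ 2 := by
  let w := fun x => f x + κ * ‖x - z‖ ^ 2
  have hquad : ContDiff ℝ 2 fun x : EuclideanSpace ℝ (Fin n) => κ * ‖x - z‖ ^ 2 :=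
    contDiff_const.mul ((contDiff_id.sub contDiff_const).norm_sq ℝ)
  have hw : ContDiff ℝ 2 w := hf.add hquad
  obtain ⟨y, hy, hmax⟩ := (isCompact_closedBall z t).exists_isMaxOn
    ⟨z, mem_closedBall_self ht⟩ hw.continuous.continuousOn
  have hyt : dist y z = t := by
    refine le_antisymm hy (not_lt.1 fun hlt => ?_)
    have hnonpos := lap_nonpos_of_isLocalMax hw
      (hmax.isLocalMax (closedBall_mem_nhds_of_mem hlt))
    rw [lap_add hf hquad, lap_const_mul_norm_sub_sq] at hnonpos
    have hn1 : (1 : ℝ) ≤ n := Nat.one_le_cast.2 (Nat.one_le_iff_ne_zero.2 hn)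
    linarith [hlap y hlt, le_mul_of_one_le_right hκ.le hn1]
  refine ⟨y, hyt, fun x hx => ?_⟩
  have hxy : f x + κ * ‖x - z‖ ^ 2 ≤ f y + κ * ‖y - z‖ ^ 2 := hmax hx
  rw [← dist_eq_norm y, hyt] at hxy
  linarith [mul_nonneg hκ.le (sq_nonneg ‖x - z‖)]

end MaximumPrinciple

section Doubling

/-- The supremum of `ψ²` over the open ball of radius `s` about `x`. -/
def ballSup {X : Type*} [PseudoMetricSpace X] (ψ : X → ℝ) (x : X) (s : ℝ) : ℝ :=
  sSup ((fun y => (ψ y) ^ 2) '' ball x s)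

/-- The doubling index of `ψ` is at most `N` on every ball of radius at most `s₀`. Since
`a / 0 = 0` and `log 0 = 0`, balls on which `ψ` vanishes identically impose no condition other
than `0 ≤ N`. -/
def HasDoublingIndexLE {X : Type*} [PseudoMetricSpace X] (ψ : X → ℝ) (s₀ N : ℝ) : Prop :=
  ∀ x s, 0 < s → s ≤ s₀ → log (ballSup ψ x (2 * s) / ballSup ψ x s) ≤ N

section PseudoMetricSpace

variable {X : Type*} [PseudoMetricSpace X] {ψ : X → ℝ} {x y : X} {s s₀ C N : ℝ}

lemma ballSup_le (hC : 0 ≤ C) (h : ∀ y ∈ ball x s, ψ y ^ 2 ≤ C) : ballSup ψ x s ≤ C :=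
  Real.sSup_le (Set.forall_mem_image.2 h) hC

lemma sq_le_ballSup [ProperSpace X] (hψ : Continuous ψ) (hy : y ∈ ball x s) :
    ψ y ^ 2 ≤ ballSup ψ x s :=
  le_csSup (((isCompact_closedBall x s).bddAbove_image (hψ.pow 2).continuousOn).mono
    (Set.image_mono ball_subset_closedBall)) (Set.mem_image_of_mem _ hy)

lemma ballSup_pos_of_mem [ProperSpace X] (hψ : Continuous ψ) (hy : y ∈ ball x s) (hne : ψ y ≠ 0) :
    0 < ballSup ψ x s :=
  (sq_pos_of_ne_zero hne).trans_le (sq_le_ballSup hψ hy)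

lemma HasDoublingIndexLE.ballSup_le_exp_mul (h : HasDoublingIndexLE ψ s₀ N) (hs : 0 < s)
    (hs₀ : s ≤ s₀) (hpos : 0 < ballSup ψ x s) (hpos' : 0 < ballSup ψ x (2 * s)) :
    ballSup ψ x (2 * s) ≤ exp N * ballSup ψ x s :=
  (div_le_iff₀ hpos).1 ((log_le_iff_le_exp (div_pos hpos' hpos)).1 (h x s hs hs₀))

end PseudoMetricSpace

variable {E : Type*} [NormedAddCommGroup E] [NormedSpace ℝ E] {ψ : E → ℝ} {x : E} {s s₀ N : ℝ}

lemma eq_zero_of_mem_closedBall_infDist (hψ : Continuous ψ) (hx : 0 < infDist x {y | ψ y ≠ 0})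
    {y : E} (hy : y ∈ closedBall x (infDist x {y | ψ y ≠ 0})) : ψ y = 0 := by
  rw [← closure_ball x hx.ne'] at hy
  exact (isClosed_eq hψ continuous_const).closure_subset_iff.2
    (fun w hw => by_contra fun hne => Set.disjoint_left.1 disjoint_ball_infDist hw hne) hy

variable [ProperSpace E]

namespace HasDoublingIndexLE

lemma le_infDist (h : HasDoublingIndexLE ψ s₀ N) (hψ : Continuous ψ) (hne : ∃ y, ψ y ≠ 0)
    (hx : 0 < infDist x {y | ψ y ≠ 0}) : s₀ ≤ infDist x {y | ψ y ≠ 0} := by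
  set S := {y | ψ y ≠ 0}
  set ρ := infDist x S
  by_contra! hlt
  obtain ⟨w, hwS, hxw⟩ := (infDist_lt_iff hne).1 (show infDist x S < 2 * ρ by linarith)
  have hw : 0 < ψ w ^ 2 := sq_pos_of_ne_zero hwS
  -- `ψ` vanishes on the closed ball of radius `ρ`, so `ψ ^ 2` is below any positive threshold on
  -- a slightly larger ball, while `ψ w ≠ 0` inside the double of that ball.
  set ε := exp (-N) * ψ w ^ 2 / 2
  have hε : 0 < ε := by positivity
  obtain ⟨δ, hδ, hsub⟩ := (isCompact_closedBall x ρ).exists_thickening_subset_open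
    (isOpen_lt (hψ.pow 2) (continuous_const (y := ε))) fun y hy => by
      have hy0 := eq_zero_of_mem_closedBall_infDist hψ hx hy
      simpa [hy0] using hε
  rw [thickening_closedBall hδ hx.le] at hsub
  set t := min (δ + ρ) s₀
  have hρt : ρ < t := lt_min (by linarith) hlt
  have hsmall : ballSup ψ x t ≤ ε := ballSup_le hε.le fun y hy =>
    (hsub (ball_subset_ball (min_le_left _ _) hy)).le
  obtain ⟨v, hvS, hxv⟩ := (infDist_lt_iff hne).1 hρt
  have hw2 : w ∈ ball x (2 * t) := mem_ball'.2 (by linarith)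
  have hdouble := h.ballSup_le_exp_mul (hx.trans hρt) (min_le_right _ _)
    (ballSup_pos_of_mem hψ (mem_ball'.2 hxv) hvS) (ballSup_pos_of_mem hψ hw2 hwS)
  have : ψ w ^ 2 ≤ ψ w ^ 2 / 2 := calc
    ψ w ^ 2 ≤ ballSup ψ x (2 * t) := sq_le_ballSup hψ hw2
    _ ≤ exp N * ε := hdouble.trans (by gcongr)
    _ = exp (N + -N) * (ψ w ^ 2 / 2) := by rw [exp_add]; ring
    _ = ψ w ^ 2 / 2 := by rw [add_neg_cancel, exp_zero, one_mul]
  linarith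

lemma ballSup_pos (h : HasDoublingIndexLE ψ s₀ N) (hs₀ : 0 < s₀) (hψ : Continuous ψ)
    (hne : ∃ y, ψ y ≠ 0) (hs : 0 < s) : 0 < ballSup ψ x s := by
  have hzero : infDist x {y | ψ y ≠ 0} = 0 := by
    by_contra hx
    obtain ⟨w, hw⟩ := hne
    obtain ⟨v, hv⟩ := mem_range_of_exists_le_of_exists_ge
      (continuous_infDist_pt {y | ψ y ≠ 0}) (c := s₀ / 2)
      ⟨w, by rw [infDist_zero_of_mem hw]; positivity⟩
      ⟨x, (half_le_self hs₀.le).trans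
        (h.le_infDist hψ ⟨w, hw⟩ (infDist_nonneg.lt_of_ne' hx))⟩
    have hge := h.le_infDist hψ ⟨w, hw⟩ (x := v) ((half_pos hs₀).trans_eq hv.symm)
    linarith [hge.trans_eq hv]
  obtain ⟨y, hy, hxy⟩ := (infDist_lt_iff hne).1 (hzero.trans_lt hs)
  exact ballSup_pos_of_mem hψ (mem_ball'.2 hxy) hy

end HasDoublingIndexLE

lemma two_pow_le_of_doubling {f : ℝ → ℝ} {K : ℝ} {m : ℕ} (hs₀ : 0 < s₀)
    (hpos : ∀ s, 0 < s → 0 < f s) {C : ℝ} (hC : ∀ s, 0 < s → s ≤ s₀ → f s ≤ C * s ^ m)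
    (hK : ∀ s, 0 < s → s ≤ s₀ → f (2 * s) ≤ K * f s) : 2 ^ m ≤ K := by
  by_contra! hlt
  have hK0 : 0 < K := pos_of_mul_pos_left
    ((hpos (2 * s₀) (by positivity)).trans_le (hK s₀ hs₀ le_rfl)) (hpos s₀ hs₀).le
  have hiter : ∀ k : ℕ, f s₀ ≤ K ^ k * f (s₀ / 2 ^ k) := by
    intro k
    induction k with
    | zero => simp
    | succ k ih =>
      have hle : s₀ / 2 ^ (k + 1) ≤ s₀ := div_le_self hs₀.le (one_le_pow₀ one_le_two)
      have h := hK (s₀ / 2 ^ (k + 1)) (by positivity) hle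
      rw [show 2 * (s₀ / 2 ^ (k + 1)) = s₀ / 2 ^ k by rw [pow_succ]; field_simp] at h
      calc f s₀ ≤ K ^ k * (K * f (s₀ / 2 ^ (k + 1))) := ih.trans (by gcongr)
        _ = K ^ (k + 1) * f (s₀ / 2 ^ (k + 1)) := by ring
  have hbound : ∀ k : ℕ, f s₀ ≤ (K / 2 ^ m) ^ k * (C * s₀ ^ m) := fun k => calc
    f s₀ ≤ K ^ k * (C * (s₀ / 2 ^ k) ^ m) := (hiter k).trans (by
      gcongr
      exact hC _ (by positivity) (div_le_self hs₀.le (one_le_pow₀ one_le_two)))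
    _ = (K / 2 ^ m) ^ k * (C * s₀ ^ m) := by
      rw [div_pow, div_pow, ← pow_mul, ← pow_mul, mul_comm k m]; ring
  have hlim : Tendsto (fun k : ℕ => (K / 2 ^ m) ^ k * (C * s₀ ^ m)) atTop (nhds 0) := by
    simpa only [zero_mul] using (tendsto_pow_atTop_nhds_zero_of_lt_one (by positivity)
      ((div_lt_one (by positivity)).2 hlt)).mul_const (C * s₀ ^ m)
  exact (hpos s₀ hs₀).not_ge (ge_of_tendsto' hlim hbound)

lemma HasDoublingIndexLE.one_le (h : HasDoublingIndexLE ψ s₀ N) (hs₀ : 0 < s₀)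
    (hψ : Continuous ψ) (hne : ∃ y, ψ y ≠ 0) (hdiff : DifferentiableAt ℝ ψ x) (hx : ψ x = 0) :
    1 ≤ N := by
  obtain ⟨C, hC, hbound⟩ := hdiff.hasFDerivAt.isBigO_sub.exists_pos
  obtain ⟨ε, hε, hsub⟩ := Metric.eventually_nhds_iff_ball.1 hbound.bound
  have hsq : ∀ s, 0 < s → s ≤ min ε s₀ → ballSup ψ x s ≤ C ^ 2 * s ^ 2 := by
    intro s hs hsε
    refine ballSup_le (by positivity) fun y hy => ?_
    have hy' := hsub y (ball_subset_ball (hsε.trans (min_le_left _ _)) hy)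
    rw [hx, sub_zero, norm_eq_abs, ← dist_eq_norm] at hy'
    rw [← mul_pow, ← sq_abs]
    have hys : dist y x ≤ s := (mem_ball.1 hy).le
    exact pow_le_pow_left₀ (abs_nonneg _) (hy'.trans (by gcongr)) 2
  have hpos : ∀ s, 0 < s → 0 < ballSup ψ x s := fun s hs => h.ballSup_pos hs₀ hψ hne hs
  have hfour : (2 : ℝ) ^ 2 ≤ exp N := two_pow_le_of_doubling (lt_min hε hs₀) hpos hsq
    fun s hs hsε => h.ballSup_le_exp_mul hs (hsε.trans (min_le_right _ _)) (hpos s hs)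
      (hpos (2 * s) (by positivity))
  exact exp_le_exp.1 (by linarith [exp_one_lt_d9])

end Doubling

section Shells

lemma two_pow_card_mul_le_of_monotone {a : ℕ → ℝ} (ha : Monotone a) (k : ℕ) :
    2 ^ ((Finset.range k).filter fun j => 2 * a j < a (j + 1)).card * a 0 ≤ a k := by
  induction k with
  | zero => simp
  | succ k ih =>
    rw [Finset.range_add_one, Finset.filter_insert]
    split_ifs with h
    · rw [Finset.card_insert_of_notMem (by simp), pow_succ]
      linarith
    · exact ih.trans (ha k.le_succ)

lemma le_card_filter_le_two_mul {a : ℕ → ℝ} {m : ℕ} (ha : Monotone a) (h0 : 0 < a 0)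
    (hm : a (2 * m) ≤ 2 ^ m * a 0) :
    m ≤ ((Finset.range (2 * m)).filter fun j => a (j + 1) ≤ 2 * a j).card := by
  have hbad : ((Finset.range (2 * m)).filter fun j => 2 * a j < a (j + 1)).card ≤ m :=
    (pow_le_pow_iff_right₀ (one_lt_two (α := ℝ))).1
      (le_of_mul_le_mul_right ((two_pow_card_mul_le_of_monotone ha _).trans hm) h0)
  have hsum := Finset.card_filter_add_card_filter_not (s := Finset.range (2 * m))
    fun j => a (j + 1) ≤ 2 * a j
  simp only [not_le, Finset.card_range] at hsum
  omega

lemma card_mul_le_ballDensity_of_dist_eq {E : Type*} [NormedAddCommGroup E] [NormedSpace ℝ E]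
    [FiniteDimensional ℝ E] [MeasurableSpace E] [BorelSpace E] {μ : Measure E}
    [μ.IsAddHaarMeasure] {P : Set E} {z : E} {r θ : ℝ} {m : ℕ} {s : Finset ℕ} {y : ℕ → E}
    (hP : MeasurableSet P) (hr : 0 < r) (hm : m ≠ 0) (hs : s ⊆ Finset.range (2 * m))
    (hy : ∀ k ∈ s, dist (y k) z = r + k * (r / (2 * m)))
    (hθ : ∀ k ∈ s, θ ≤ ballDensity μ P (y k) (r / (4 * m))) :
    s.card * (θ * (1 / (12 * m)) ^ Module.finrank ℝ E) ≤ ballDensity μ P z (3 * r) := by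
  have : (1 : ℝ) ≤ m := Nat.one_le_cast.2 (Nat.one_le_iff_ne_zero.2 hm)
  have hgap : r / (2 * m) = r / (4 * m) + r / (4 * m) := by field_simp; norm_num
  rw [show 1 / (12 * (m : ℝ)) = r / (4 * m) / (3 * r) by field_simp; norm_num]
  refine card_mul_le_ballDensity hP (by positivity) (by positivity) (fun k hk => ?_) ?_ hθ
  · have hk1 : (k : ℝ) + 1 ≤ 2 * m := by exact_mod_cast Finset.mem_range.1 (hs hk)
    refine ball_subset_ball' ?_
    have hlast : (k + 1) * (r / (2 * m)) ≤ r := calc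
      (k + 1) * (r / (2 * m)) ≤ 2 * m * (r / (2 * m)) := by gcongr
      _ = r := by field_simp
    rw [hy k hk]
    linarith [show 0 ≤ r / (4 * m) by positivity]
  · intro k hk l hl hkl
    refine ball_disjoint_ball ?_
    have hkl1 : (1 : ℝ) ≤ |(k : ℝ) - l| := by
      exact_mod_cast Int.one_le_abs (sub_ne_zero.2 (Nat.cast_injective.ne hkl))
    calc r / (4 * m) + r / (4 * m) ≤ |(k : ℝ) - l| * (r / (2 * m)) := by
          rw [← hgap]
          exact le_mul_of_one_le_left (by positivity) hkl1
      _ = |dist (y k) z - dist (y l) z| := by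
          rw [hy k hk, hy l hl, add_sub_add_left_eq_sub, ← sub_mul, abs_mul,
            abs_of_nonneg (show 0 ≤ r / (2 * m) by positivity)]
      _ ≤ dist (y k) (y l) := abs_dist_sub_le _ _ _

end Shells

section BallMax

/-- The maximum of `ψ` over the closed ball of radius `t` about `z`. -/
def ballMax {X : Type*} [PseudoMetricSpace X] (ψ : X → ℝ) (z : X) (t : ℝ) : ℝ :=
  sSup (ψ '' closedBall z t)

variable {X : Type*} [PseudoMetricSpace X] [ProperSpace X] {ψ : X → ℝ} {y z : X} {t t' : ℝ}

lemma le_ballMax (hψ : Continuous ψ) (hy : y ∈ closedBall z t) : ψ y ≤ ballMax ψ z t :=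
  le_csSup ((isCompact_closedBall z t).bddAbove_image hψ.continuousOn) (Set.mem_image_of_mem _ hy)

lemma exists_mem_closedBall_eq_ballMax (hψ : Continuous ψ) (ht : 0 ≤ t) :
    ∃ y ∈ closedBall z t, ψ y = ballMax ψ z t :=
  ((isCompact_closedBall z t).exists_sSup_image_eq ⟨z, mem_closedBall_self ht⟩
    hψ.continuousOn).imp fun _ h => ⟨h.1, h.2.symm⟩

lemma ballMax_mono (hψ : Continuous ψ) (ht : 0 ≤ t) (htt : t ≤ t') :
    ballMax ψ z t ≤ ballMax ψ z t' := by
  obtain ⟨y, hy, hmax⟩ := exists_mem_closedBall_eq_ballMax (z := z) hψ ht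
  exact hmax ▸ le_ballMax hψ (closedBall_subset_closedBall htt hy)

end BallMax

/-- The proportion of `{0 ≤ ψ}` guaranteed in a small ball on which `ψ` is at most four times its
value at the centre. -/
def shellDensity (n : ℕ) : ℝ :=
  bumpMass (volume : Measure (EuclideanSpace ℝ (Fin n))) 1 /
    (8 * volume.real (ball (0 : EuclideanSpace ℝ (Fin n)) 1))

lemma shellDensity_pos (n : ℕ) : 0 < shellDensity n :=
  div_pos (bumpMass_pos one_ne_zero) (mul_pos (by norm_num) (measureReal_ball_pos one_pos))

/-- The proportion of `{0 ≤ ψ}` guaranteed in a small ball about a zero of `ψ` when the doubling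
index is `1`. -/
def zeroDensity (n : ℕ) : ℝ :=
  shellDensity n / (12 ^ n * (4 * n + 12) ^ (n - 1))

lemma zeroDensity_pos (n : ℕ) : 0 < zeroDensity n :=
  div_pos (shellDensity_pos n) (by positivity)

lemma exp_sq_mul_le_two_pow {N : ℝ} (hN : 1 ≤ N) (n : ℕ) :
    exp N ^ 2 * (3 * 4 ^ n) ≤ 2 ^ ((2 * n + 6) * ⌈N⌉₊) := by
  have hexp : exp N ≤ 4 ^ ⌈N⌉₊ := calc
    exp N ≤ exp 1 ^ ⌈N⌉₊ := by
      rw [← exp_nat_mul, mul_one]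
      exact exp_le_exp.2 (Nat.le_ceil N)
    _ ≤ 4 ^ ⌈N⌉₊ := by
      gcongr
      linarith [exp_one_lt_d9]
  have hceil : 1 ≤ ⌈N⌉₊ := Nat.one_le_ceil_iff.2 (by linarith)
  calc exp N ^ 2 * (3 * 4 ^ n) ≤ (4 ^ ⌈N⌉₊) ^ 2 * (4 ^ ⌈N⌉₊ * 4 ^ (n * ⌈N⌉₊)) := by
        gcongr
        · exact (by norm_num : (3 : ℝ) ≤ 4).trans (le_self_pow₀ (by norm_num) (by omega))
        · norm_num
        · exact Nat.le_mul_of_pos_right n hceil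
    _ = 4 ^ ((n + 3) * ⌈N⌉₊) := by ring
    _ = 2 ^ ((2 * n + 6) * ⌈N⌉₊) := by
        rw [show (4 : ℝ) = 2 ^ 2 by norm_num, ← pow_mul]
        ring_nf

/-- A nonzero solution of `Δψ = -lam • ψ` on `ℝⁿ` whose doubling index is at most `N` on all balls
of radius at most `s₀`, where `s₀` is at most half the wavelength scale `lam ^ (-1 / 2)`. -/
structure IsDoublingEigenfunction {n : ℕ} (ψ : EuclideanSpace ℝ (Fin n) → ℝ) (lam s₀ N : ℝ) :
    Prop where
  contDiff : ContDiff ℝ 2 ψ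
  lap_eq : ∀ x, lap n ψ x = -lam * ψ x
  exists_ne : ∃ x, ψ x ≠ 0
  lam_pos : 0 < lam
  scale_pos : 0 < s₀
  mul_sq_scale_le : lam * s₀ ^ 2 ≤ 1 / 4
  doubling : HasDoublingIndexLE ψ s₀ N

namespace IsDoublingEigenfunction

variable {n : ℕ} {ψ : EuclideanSpace ℝ (Fin n) → ℝ} {lam s₀ N : ℝ}
  {x y z p : EuclideanSpace ℝ (Fin n)} {r s t δ Q R : ℝ}

lemma continuous (h : IsDoublingEigenfunction ψ lam s₀ N) : Continuous ψ :=
  h.contDiff.continuous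

lemma dim_ne_zero (h : IsDoublingEigenfunction ψ lam s₀ N) : n ≠ 0 := by
  rintro rfl
  obtain ⟨x, hx⟩ := h.exists_ne
  have hlap := h.lap_eq x
  rw [lap, Finset.univ_eq_empty, Finset.sum_empty, eq_comm, mul_eq_zero, neg_eq_zero] at hlap
  exact hlap.elim h.lam_pos.ne' hx

lemma mul_sq_le (h : IsDoublingEigenfunction ψ lam s₀ N) (hr : 0 ≤ r) (hrs : r ≤ s₀) :
    lam * r ^ 2 ≤ 1 / 4 :=
  le_trans (by have := h.lam_pos; gcongr) h.mul_sq_scale_le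

lemma one_le_index (h : IsDoublingEigenfunction ψ lam s₀ N) (hz : ψ z = 0) : 1 ≤ N :=
  h.doubling.one_le h.scale_pos h.continuous h.exists_ne
    (h.contDiff.differentiable two_ne_zero z) hz

lemma ballSup_pos (h : IsDoublingEigenfunction ψ lam s₀ N) (hs : 0 < s) : 0 < ballSup ψ x s :=
  h.doubling.ballSup_pos h.scale_pos h.continuous h.exists_ne hs

lemma ballSup_two_pow_mul_le (h : IsDoublingEigenfunction ψ lam s₀ N) (hs : 0 < s) {k : ℕ}
    (hk : 2 ^ k * s ≤ 2 * s₀) : ballSup ψ x (2 ^ k * s) ≤ exp N ^ k * ballSup ψ x s := by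
  induction k with
  | zero => simp
  | succ k ih =>
    rw [pow_succ', mul_assoc] at hk ⊢
    have hks : 2 ^ k * s ≤ s₀ := le_of_mul_le_mul_left hk two_pos
    calc ballSup ψ x (2 * (2 ^ k * s)) ≤ exp N * ballSup ψ x (2 ^ k * s) :=
          h.doubling.ballSup_le_exp_mul (by positivity) hks (h.ballSup_pos (by positivity))
            (h.ballSup_pos (by positivity))
      _ ≤ exp N * (exp N ^ k * ballSup ψ x s) := by
          gcongr
          exact ih (by linarith [h.scale_pos])
      _ = exp N ^ (k + 1) * ballSup ψ x s := by ring

lemma ballSup_quarter_le (h : IsDoublingEigenfunction ψ lam s₀ N) (hz : ψ z = 0) (hr : 0 < r)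
    (hrs : r ≤ s₀) : ballSup ψ z (r / 4) ≤ (3 * 4 ^ n * ballMax ψ z r) ^ 2 := by
  refine ballSup_le (sq_nonneg _) fun y hy => ?_
  rw [← sq_abs]
  exact pow_le_pow_left₀ (abs_nonneg _) (abs_le_of_eigenfunction_of_eq_zero h.contDiff hr
    h.lam_pos.le ((h.mul_sq_le hr.le hrs).trans (by norm_num)) h.lap_eq hz
    (fun x hx => le_ballMax h.continuous hx) (ball_subset_closedBall hy)) 2

lemma ballMax_pos (h : IsDoublingEigenfunction ψ lam s₀ N) (hz : ψ z = 0) (hr : 0 < r)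
    (hrs : r ≤ s₀) : 0 < ballMax ψ z r := by
  have hnonneg : 0 ≤ ballMax ψ z r :=
    hz.symm.trans_le (le_ballMax h.continuous (mem_closedBall_self hr.le))
  refine hnonneg.lt_of_ne fun hzero => ?_
  have hle := h.ballSup_quarter_le hz hr hrs
  rw [← hzero, mul_zero, zero_pow two_ne_zero] at hle
  exact (h.ballSup_pos (by positivity)).not_ge hle

lemma ballMax_two_mul_le (h : IsDoublingEigenfunction ψ lam s₀ N) (hz : ψ z = 0) (hr : 0 < r)
    (hrs : 2 * r ≤ s₀) :
    ballMax ψ z (2 * r) ≤ exp N ^ 2 * (3 * 4 ^ n * ballMax ψ z r) := by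
  have hpos := h.ballMax_pos hz hr (by linarith)
  obtain ⟨y, hy, hmax⟩ :=
    exists_mem_closedBall_eq_ballMax (z := z) h.continuous (by positivity : 0 ≤ 2 * r)
  refine le_of_abs_le (abs_le_of_sq_le_sq ?_ (by positivity))
  calc ballMax ψ z (2 * r) ^ 2 = ψ y ^ 2 := by rw [hmax]
    _ ≤ ballSup ψ z (2 ^ 4 * (r / 4)) :=
        sq_le_ballSup h.continuous (closedBall_subset_ball (by linarith) hy)
    _ ≤ exp N ^ 4 * ballSup ψ z (r / 4) :=
        h.ballSup_two_pow_mul_le (by positivity) (by linarith)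
    _ ≤ exp N ^ 4 * (3 * 4 ^ n * ballMax ψ z r) ^ 2 := by
        gcongr
        exact h.ballSup_quarter_le hz hr (by linarith)
    _ = (exp N ^ 2 * (3 * 4 ^ n * ballMax ψ z r)) ^ 2 := by ring

lemma exists_dist_eq_ballMax_le (h : IsDoublingEigenfunction ψ lam s₀ N) (ht : 0 ≤ t)
    (hts : t ≤ s₀) (hpos : 0 < ballMax ψ z t) :
    ∃ y, dist y z = t ∧ ballMax ψ z t ≤ 2 * ψ y := by
  obtain ⟨y, hy, hle⟩ := exists_dist_eq_forall_le_of_le_lap h.dim_ne_zero h.contDiff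
    (mul_pos h.lam_pos hpos) ht fun x hx => by
      rw [h.lap_eq, ← neg_mul]
      have := le_ballMax h.continuous (ball_subset_closedBall hx)
      nlinarith [h.lam_pos]
  obtain ⟨w, hw, hmax⟩ := exists_mem_closedBall_eq_ballMax (z := z) h.continuous ht
  refine ⟨y, hy, ?_⟩
  nlinarith [hle w hw, h.mul_sq_le ht hts]

lemma shellDensity_le_ballDensity (h : IsDoublingEigenfunction ψ lam s₀ N) (hδ : 0 < δ)
    (hδs : δ ≤ s₀) (hy : 0 < ψ y) (hle : ∀ x ∈ closedBall y δ, ψ x ≤ 4 * ψ y) :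
    shellDensity n ≤ ballDensity volume {x | 0 ≤ ψ x} y δ := by
  have hlam := h.lam_pos
  have hω := measureReal_ball_pos (μ := volume) (x := (0 : EuclideanSpace ℝ (Fin n))) one_pos
  have hmass := bumpMass_mul_le_ballDensity (μ := volume) (κ := 4 * lam * ψ y) h.contDiff hδ
    (by positivity) (fun x hx => hle x (ball_subset_closedBall hx))
    (fun x hx => by rw [h.lap_eq]; nlinarith [hle x hx])
    (by nlinarith [h.mul_sq_le hδ.le hδs])
  rw [shellDensity, div_le_iff₀ (by positivity)]
  exact le_of_mul_le_mul_right (by linarith) hy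

lemma exists_dist_eq_shellDensity_le (h : IsDoublingEigenfunction ψ lam s₀ N) (ht : 0 ≤ t)
    (hδ : 0 < δ) (hts : t + δ ≤ s₀) (hpos : 0 < ballMax ψ z t)
    (hdouble : ballMax ψ z (t + δ) ≤ 2 * ballMax ψ z t) :
    ∃ y, dist y z = t ∧ shellDensity n ≤ ballDensity volume {x | 0 ≤ ψ x} y δ := by
  obtain ⟨y, hyt, hy⟩ := h.exists_dist_eq_ballMax_le ht (by linarith) hpos
  refine ⟨y, hyt, h.shellDensity_le_ballDensity hδ (by linarith) (by linarith) fun x hx => ?_⟩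
  have := le_ballMax h.continuous (closedBall_subset_closedBall' (by rw [hyt, add_comm]) hx)
  linarith

lemma exists_finset_ballMax_le_two_mul (h : IsDoublingEigenfunction ψ lam s₀ N) (hz : ψ z = 0)
    (hr : 0 < r) (hrs : 2 * r ≤ s₀) {m : ℕ} (hm : m ≠ 0)
    (hmN : exp N ^ 2 * (3 * 4 ^ n) ≤ 2 ^ m) :
    ∃ s ⊆ Finset.range (2 * m), m ≤ s.card ∧ ∀ k ∈ s,
      ballMax ψ z (r + k * (r / (2 * m)) + r / (2 * m)) ≤
        2 * ballMax ψ z (r + k * (r / (2 * m))) := by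
  have : (0 : ℝ) < m := Nat.cast_pos.2 (Nat.pos_of_ne_zero hm)
  let a : ℕ → ℝ := fun k => ballMax ψ z (r + k * (r / (2 * m)))
  have hmono : Monotone a := fun k l hkl =>
    ballMax_mono h.continuous (by positivity) (by gcongr)
  have ha0 : a 0 = ballMax ψ z r := by simp only [a, Nat.cast_zero, zero_mul, add_zero]
  have hlast : a (2 * m) = ballMax ψ z (2 * r) := by
    simp only [a]
    congr 1
    push_cast
    field_simp
    norm_num
  refine ⟨_, Finset.filter_subset (fun j => a (j + 1) ≤ 2 * a j) _,
    le_card_filter_le_two_mul hmono (ha0 ▸ h.ballMax_pos hz hr (by linarith)) ?_, fun k hk => ?_⟩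
  · rw [hlast, ha0]
    calc ballMax ψ z (2 * r) ≤ exp N ^ 2 * (3 * 4 ^ n) * ballMax ψ z r := by
          rw [mul_assoc]
          exact h.ballMax_two_mul_le hz hr hrs
      _ ≤ 2 ^ m * ballMax ψ z r := by
          have := h.ballMax_pos hz hr (by linarith)
          gcongr
  · convert (Finset.mem_filter.1 hk).2 using 2
    push_cast
    ring

lemma mul_shellDensity_le_ballDensity (h : IsDoublingEigenfunction ψ lam s₀ N) (hz : ψ z = 0)
    (hr : 0 < r) (hrs : 2 * r ≤ s₀) {m : ℕ} (hm : m ≠ 0)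
    (hmN : exp N ^ 2 * (3 * 4 ^ n) ≤ 2 ^ m) :
    m * (shellDensity n * (1 / (12 * m)) ^ n) ≤ ballDensity volume {x | 0 ≤ ψ x} z (3 * r) := by
  have : (0 : ℝ) < m := Nat.cast_pos.2 (Nat.pos_of_ne_zero hm)
  obtain ⟨s, hs, hcard, hdouble⟩ := h.exists_finset_ballMax_le_two_mul hz hr hrs hm hmN
  have hcenter : ∀ k ∈ s, ∃ y, dist y z = r + k * (r / (2 * m)) ∧
      shellDensity n ≤ ballDensity volume {x | 0 ≤ ψ x} y (r / (4 * m)) := by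
    intro k hk
    have hk1 : (k : ℝ) + 1 ≤ 2 * m := by exact_mod_cast Finset.mem_range.1 (hs hk)
    have ht : r + k * (r / (2 * m)) + r / (2 * m) ≤ s₀ := calc
      r + k * (r / (2 * m)) + r / (2 * m) = r + (k + 1) * (r / (2 * m)) := by ring
      _ ≤ r + 2 * m * (r / (2 * m)) := by gcongr
      _ = 2 * r := by field_simp; norm_num
      _ ≤ s₀ := hrs
    have hgap : r / (4 * m) ≤ r / (2 * m) := by gcongr; norm_num
    have hmono := ballMax_mono (z := z) h.continuous (t := r) (t' := r + k * (r / (2 * m))) hr.le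
      (le_add_of_nonneg_right (by positivity))
    exact h.exists_dist_eq_shellDensity_le (by positivity) (by positivity) (by linarith)
      ((h.ballMax_pos hz hr (by linarith)).trans_le hmono)
      ((ballMax_mono h.continuous (by positivity) (by linarith)).trans (hdouble k hk))
  choose! y hy using hcenter
  have hdensity := card_mul_le_ballDensity_of_dist_eq
    (isClosed_le continuous_const h.continuous).measurableSet hr hm hs
    (fun k hk => (hy k hk).1) (fun k hk => (hy k hk).2)
  rw [finrank_euclideanSpace_fin] at hdensity
  have := shellDensity_pos n
  exact le_trans (by gcongr) hdensity

theorem zeroDensity_div_le_ballDensity_three_mul (h : IsDoublingEigenfunction ψ lam s₀ N)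
    (hz : ψ z = 0) (hr : 0 < r) (hrs : 2 * r ≤ s₀) :
    zeroDensity n / N ^ (n - 1) ≤ ballDensity volume {x | 0 ≤ ψ x} z (3 * r) := by
  have hN := h.one_le_index hz
  set m := (2 * n + 6) * ⌈N⌉₊ with hm
  have hm0 : m ≠ 0 := mul_ne_zero (by omega) (Nat.ceil_pos.2 (by linarith)).ne'
  have hmN : (m : ℝ) ≤ (4 * n + 12) * N := by
    have hceil : (⌈N⌉₊ : ℝ) ≤ 2 * N := by linarith [Nat.ceil_lt_add_one (by linarith : 0 ≤ N)]
    calc (m : ℝ) = (2 * n + 6) * ⌈N⌉₊ := by rw [hm]; push_cast; ring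
      _ ≤ (2 * n + 6) * (2 * N) := by gcongr
      _ = (4 * n + 12) * N := by ring
  refine le_trans ?_
    (h.mul_shellDensity_le_ballDensity hz hr hrs hm0 (exp_sq_mul_le_two_pow hN n))
  have hshell := shellDensity_pos n
  have : (0 : ℝ) < m := Nat.cast_pos.2 (Nat.pos_of_ne_zero hm0)
  calc zeroDensity n / N ^ (n - 1)
      = shellDensity n / (12 ^ n * ((4 * n + 12) * N) ^ (n - 1)) := by
        rw [zeroDensity, mul_pow, div_div, mul_assoc]
    _ ≤ shellDensity n / (12 ^ n * (m : ℝ) ^ (n - 1)) := by gcongr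
    _ = m * (shellDensity n * (1 / (12 * m)) ^ n) := by
        rw [div_pow, one_pow, mul_pow, ← mul_pow_sub_one h.dim_ne_zero (m : ℝ)]
        field_simp

lemma le_ballDensity_of_le (h : IsDoublingEigenfunction ψ lam s₀ N) (hQ : 1 ≤ Q) (hR : 0 < R)
    (hRQ : R ≤ 2 * Q * s₀) (hz : ψ z = 0) (hzp : z ∈ ball p (R / 2)) :
    (1 / (2 * Q)) ^ n * (zeroDensity n / N ^ (n - 1)) ≤ ballDensity volume {x | 0 ≤ ψ x} p R := by
  have hr : 2 * (R / (6 * Q)) ≤ s₀ := by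
    have := h.scale_pos
    rw [← mul_div_assoc, div_le_iff₀ (by positivity)]
    nlinarith
  have hzero := h.zeroDensity_div_le_ballDensity_three_mul hz (by positivity) hr
  have hradius : 3 * (R / (6 * Q)) = R / (2 * Q) := by field_simp; norm_num
  have hsub : ball z (R / (2 * Q)) ⊆ ball p R := by
    have hle : R / (2 * Q) ≤ R / 2 := by gcongr; linarith
    exact ball_subset_ball' (by linarith [mem_ball.1 hzp])
  have hmono := ballDensity_mono (μ := volume) (P := {x | 0 ≤ ψ x}) (by positivity) hR hsub
  rw [finrank_euclideanSpace_fin, div_div_cancel_left' hR.ne', inv_eq_one_div] at hmono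
  rw [hradius] at hzero
  exact le_trans (by gcongr) hmono

lemma le_ballDensity_of_lt_mul_sq (h : IsDoublingEigenfunction ψ lam s₀ N) (hQ : 1 ≤ Q)
    (hlarge : 304 * 2 ^ n < lam * (Q * s₀) ^ 2) (p : EuclideanSpace ℝ (Fin n)) :
    (1 / (2 * Q)) ^ n * (zeroDensity n / N ^ (n - 1)) ≤
      ballDensity volume {x | 0 ≤ ψ x} p (Q * s₀) := by
  have hρ : 0 < Q * s₀ := mul_pos (by linarith) h.scale_pos
  obtain ⟨w, hwp, hw⟩ := exists_mem_closedBall_eq_zero (p := p) h.contDiff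
    (by positivity : 0 < Q * s₀ / 4) h.lam_pos.le (fun x _ => h.lap_eq x) (by linarith)
  exact h.le_ballDensity_of_le hQ hρ (by linarith) hw
    (closedBall_subset_ball (by linarith) hwp)

theorem le_ballDensity (h : IsDoublingEigenfunction ψ lam s₀ N) (hQ : 1 ≤ Q)
    (hlarge : 304 * 2 ^ n < lam * (Q * s₀) ^ 2) (hR : 0 < R) (hz : ψ z = 0)
    (hzp : z ∈ ball p (R / 2)) :
    (1 / (2 * Q)) ^ n * (zeroDensity n / N ^ (n - 1)) / 2 ^ n ≤
      ballDensity volume {x | 0 ≤ ψ x} p R := by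
  rcases le_or_gt R (2 * Q * s₀) with hsmall | hbig
  · have hN := h.one_le_index hz
    have hc := zeroDensity_pos n
    exact (div_le_self (by positivity) (one_le_pow₀ one_le_two)).trans
      (h.le_ballDensity_of_le hQ hR hsmall hz hzp)
  · have havg := le_ballDensity_of_forall_le (mul_pos (by linarith) h.scale_pos)
      ((mul_assoc 2 Q s₀).symm.trans_le hbig.le) (h.le_ballDensity_of_lt_mul_sq hQ hlarge) p
    rwa [finrank_euclideanSpace_fin] at havg

end IsDoublingEigenfunction

lemma mul_rpow_neg_one_div_two_sq {lam : ℝ} (hlam : 0 < lam) :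
    lam * (lam ^ (-(1 : ℝ) / 2)) ^ 2 = 1 := by
  rw [← rpow_natCast, ← rpow_mul hlam.le, Nat.cast_ofNat, div_mul_cancel₀ _ two_ne_zero,
    rpow_neg_one, mul_inv_cancel₀ hlam.ne']

theorem positivity_volume_ratio_lower_bound_general (n : ℕ) {ε : ℝ} (hε : 0 < ε) :
    ∃ a₃ : ℝ, 0 < a₃ ∧ ∀ (ψ : EuclideanSpace ℝ (Fin n) → ℝ) (lam N : ℝ),
      0 < lam → ContDiff ℝ 2 ψ → (∀ x, lap n ψ x = -lam * ψ x) → (∃ x, ψ x ≠ 0) →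
      HasDoublingIndexLE ψ (ε * lam ^ (-(1 : ℝ) / 2)) N →
      ∀ (p : EuclideanSpace ℝ (Fin n)) (R : ℝ), 0 < R → (∃ z ∈ ball p (R / 2), ψ z = 0) →
        a₃ / N ^ (n - 1) ≤ ballDensity volume {y | 0 ≤ ψ y} p R := by
  set η := min ε (1 / 2)
  have hη : 0 < η := lt_min hε (by norm_num)
  have hη2 : η ≤ 1 / 2 := min_le_right _ _
  have hpow : (1 : ℝ) ≤ 2 ^ n := one_le_pow₀ one_le_two
  set Q := 18 * 2 ^ n / η
  have hQ : 1 ≤ Q := (one_le_div hη).2 (by linarith)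
  have hc := zeroDensity_pos n
  refine ⟨(1 / (2 * Q)) ^ n * zeroDensity n / 2 ^ n, by positivity, ?_⟩
  rintro ψ lam N hlam hψ heq hne hN p R hR ⟨z, hzp, hz⟩
  set L := lam ^ (-(1 : ℝ) / 2)
  have hL : 0 < L := rpow_pos_of_pos hlam _
  have hlamL : lam * L ^ 2 = 1 := mul_rpow_neg_one_div_two_sq hlam
  have hscale : ∀ a, lam * (a * L) ^ 2 = a ^ 2 := fun a => by linear_combination a ^ 2 * hlamL
  have h : IsDoublingEigenfunction ψ lam (η * L) N :=
    ⟨hψ, heq, hne, hlam, mul_pos hη hL, by rw [hscale]; nlinarith,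
      fun x s hs hsη => hN x s hs (hsη.trans (by gcongr; exact min_le_left _ _))⟩
  have hlarge : 304 * 2 ^ n < lam * (Q * (η * L)) ^ 2 := by
    rw [← mul_assoc, hscale, div_mul_cancel₀ _ hη.ne']
    nlinarith
  convert h.le_ballDensity hQ hlarge hR hz hzp using 1
  ring

theorem positivity_volume_ratio_lower_bound
    (n : ℕ) (hn : 3 ≤ n) :
    ∃ ε₀ R₀ a₃ : ℝ, ε₀ ∈ Set.Ioo (0:ℝ) 1 ∧ 0 < R₀ ∧ 0 < a₃ ∧
      ∀ (ψ : EuclideanSpace ℝ (Fin n) → ℝ) (lam : ℝ),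
        1 ≤ lam → ContDiff ℝ (⊤ : ℕ∞) ψ → ZnPeriodic n ψ →
        (∀ x, lap n ψ x = -lam * ψ x) → (∃ x, ψ x ≠ 0) →
        ∀ (p : EuclideanSpace ℝ (Fin n)) (R : ℝ), 0 < R → R < R₀ →
        (∃ z ∈ Metric.ball p (R/2), ψ z = 0) →
        a₃ / (sSup {t : ℝ | ∃ (x : EuclideanSpace ℝ (Fin n)) (s : ℝ),
              0 < s ∧ s ≤ ε₀ * lam ^ (-(1:ℝ)/2) ∧
              t = Real.log (sSup ((fun y => (ψ y)^2) '' Metric.ball x (2*s)) /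
                    sSup ((fun y => (ψ y)^2) '' Metric.ball x s))}) ^ (n-1) ≤
          (volume ({y | 0 ≤ ψ y} ∩ Metric.ball p R)).toReal /
            (volume (Metric.ball p R)).toReal := by
  obtain ⟨a₃, ha₃, hmain⟩ := positivity_volume_ratio_lower_bound_general n one_half_pos
  refine ⟨1 / 2, 1, a₃, by norm_num, one_pos, ha₃, ?_⟩
  intro ψ lam hlam hψ _ heq hne p R hR _ hz
  set T := {t : ℝ | ∃ (x : EuclideanSpace ℝ (Fin n)) (s : ℝ), 0 < s ∧
    s ≤ 1 / 2 * lam ^ (-(1:ℝ)/2) ∧ t = Real.log (sSup ((fun y => (ψ y)^2) '' Metric.ball x (2*s)) /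
      sSup ((fun y => (ψ y)^2) '' Metric.ball x s))}
  by_cases hbdd : BddAbove T
  · exact hmain ψ lam (sSup T) (by linarith) (contDiff_infty.1 hψ 2) heq hne
      (fun x s hs hsε => le_csSup hbdd ⟨x, s, hs, hsε, rfl⟩) p R hR hz
  · -- An unbounded doubling index has junk supremum `0`; the left side is then `a₃ / 0 = 0`, the
    -- same value as `a₃ / ∞`.
    rw [Real.sSup_of_not_bddAbove hbdd, zero_pow (by omega), div_zero]
    positivity
end
end
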